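/- arXiv:2205.08854 — 6 statements merged into one kernel-verified Lean document; each statement's English description precedes it below -/
import Mathlib

section
/- For all u, v ∈ F one has u ∈ FvF (i.e. u ≤_𝒥 v) if and only if vρ - vλ ≤ uρ - uλ. Consequently F is finite 𝒥-above: for every u ∈ F the set {v ∈ F : u ∈ FvF} is finite. -/
/-!
View `u ∈ F` as a walk on `ℤ` that starts at `0`, ends at `u.p` and visits exactly the interval
`[u.l, u.r]`. The walk of `x * v * y` contains a translate of the walk of `v`, so its interval is
at least as long. Conversely, if `[v.l, v.r]` is no longer than `[u.l, u.r]`, slide it so that the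
left ends agree: `x` sweeps out all of `[u.l, u.r]` and stops at `u.l - v.l`, then `v` runs inside
`[u.l, u.r]`, and `y` moves to the end point `u.p` without leaving that interval.
Finiteness follows because the coordinates of every `v` above `u` are bounded in absolute value by
the length of the interval of `u`.
-/

open Pointwise

/-- The monogenic free inverse monoid `F`, realized concretely as the monoid of triples
`u = (uλ, uπ, uρ) ∈ ℤ³` with `uλ ≤ 0 ≤ uρ` and `uλ ≤ uπ ≤ uρ`. -/
@[ext]
structure F where
  l : ℤ
  p : ℤ
  r : ℤ
  hl : l ≤ 0
  hr : 0 ≤ r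
  hlp : l ≤ p
  hpr : p ≤ r

namespace F

instance : Mul F where
  mul u v := ⟨min u.l (u.p + v.l), u.p + v.p, max u.r (u.p + v.r),
    by have h1 := u.hl; have h2 := v.hl; omega,
    by have h1 := u.hr; have h2 := v.hr; omega,
    by have h1 := u.hlp; have h2 := v.hlp; omega,
    by have h1 := u.hpr; have h2 := v.hpr; omega⟩

instance : One F where
  one := ⟨0, 0, 0, le_refl 0, le_refl 0, le_refl 0, le_refl 0⟩

@[simp] theorem mul_l (u v : F) : (u * v).l = min u.l (u.p + v.l) := rfl
@[simp] theorem mul_p (u v : F) : (u * v).p = u.p + v.p := rfl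
@[simp] theorem mul_r (u v : F) : (u * v).r = max u.r (u.p + v.r) := rfl
@[simp] theorem one_l : (1 : F).l = 0 := rfl
@[simp] theorem one_p : (1 : F).p = 0 := rfl
@[simp] theorem one_r : (1 : F).r = 0 := rfl

instance : Monoid F where
  mul_assoc u v w := by ext <;> simp <;> omega
  one_mul u := by have := u.hl; have := u.hr; ext <;> simp <;> omega
  mul_one u := by have := u.hlp; have := u.hpr; ext <;> simp <;> omega

/-- The generator `a = (0,1,1)` of `F`. -/
def a : F := ⟨0, 1, 1, by omega, by omega, by omega, by omega⟩

/-- The inverse `a⁻¹ = (-1,-1,0)` of the generator. -/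
def ainv : F := ⟨-1, -1, 0, by omega, by omega, by omega, by omega⟩

/-- Inversion in `F`: `u⁻¹ = (uλ - uπ, -uπ, uρ - uπ)`. -/
def inv (u : F) : F := ⟨u.l - u.p, -u.p, u.r - u.p,
  by have := u.hlp; omega, by have := u.hpr; omega,
  by have := u.hl; omega, by have := u.hr; omega⟩

/-- Rational subsets of `F`: the smallest family of subsets containing all finite subsets
and closed under binary union, setwise product, and star. -/
inductive IsRat : Set F → Prop
  | finite : ∀ S : Set F, S.Finite → IsRat S
  | union : ∀ S T : Set F, IsRat S → IsRat T → IsRat (S ∪ T)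
  | mul : ∀ S T : Set F, IsRat S → IsRat T → IsRat (S * T)
  | star : ∀ S : Set F, IsRat S → IsRat (⋃ k : ℕ, S ^ k)

/-- The canonical homomorphism `θ` from the free monoid on the two-letter alphabet
`{a, a⁻¹}` (encoded as `Bool`: `true ↦ a`, `false ↦ a⁻¹`) onto `F`. -/
def theta : FreeMonoid Bool →* F := FreeMonoid.lift fun b => bif b then a else ainv

end F

theorem F.length_le_of_mul_mul (x v y : F) :
    v.r - v.l ≤ (x * v * y).r - (x * v * y).l := by
  simp only [F.mul_l, F.mul_r]
  omega

theorem F.exists_mul_mul_eq {u v : F} (h : v.r - v.l ≤ u.r - u.l) :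
    ∃ x y : F, x * v * y = u := by
  obtain ⟨ul, up, ur, hul, hur, hulp, hupr⟩ := u
  obtain ⟨vl, vp, vr, hvl, hvr, hvlp, hvpr⟩ := v
  dsimp only at h
  -- `y` is the interval of `u` seen from the point `ul - vl + vp` where `x * v` ends
  refine ⟨⟨ul, ul - vl, ur, hul, hur, by omega, by omega⟩,
    ⟨ul - (ul - vl + vp), up - (ul - vl + vp), ur - (ul - vl + vp),
      by omega, by omega, by omega, by omega⟩, ?_⟩
  ext <;> simp only [F.mul_l, F.mul_p, F.mul_r] <;> omega

theorem F.finite_length_le (n : ℤ) : {v : F | v.r - v.l ≤ n}.Finite := by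
  have hinj : Function.Injective fun v : F => (v.l, v.p, v.r) := by
    intro v w h
    simp only [Prod.mk.injEq] at h
    exact F.ext h.1 h.2.1 h.2.2
  refine ((Set.finite_Icc ((-n, -n, -n) : ℤ × ℤ × ℤ) (n, n, n)).preimage hinj.injOn).subset ?_
  intro v hv
  have := v.hl
  have := v.hr
  have := v.hlp
  have := v.hpr
  simp only [Set.mem_ofPred_eq] at hv
  simp only [Set.mem_preimage, Set.mem_Icc, Prod.mk_le_mk]
  omega

/-- For all `u, v ∈ F`, `u ∈ FvF` (i.e. `u ≤_𝒥 v`) iff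
`vρ - vλ ≤ uρ - uλ`.  Consequently `F` is finite 𝒥-above: for every `u ∈ F` the set
`{v ∈ F : u ∈ FvF}` is finite. -/
theorem J_order_iff_and_finite_J_above :
    (∀ u v : F, (∃ x y : F, x * v * y = u) ↔ v.r - v.l ≤ u.r - u.l) ∧
    (∀ u : F, {v : F | ∃ x y : F, x * v * y = u}.Finite) := by
  have hJ : ∀ u v : F, (∃ x y : F, x * v * y = u) ↔ v.r - v.l ≤ u.r - u.l := by
    intro u v
    constructor
    · rintro ⟨x, y, rfl⟩
      exact F.length_le_of_mul_mul x v y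
    · exact F.exists_mul_mul_eq
  refine ⟨hJ, fun u => ?_⟩
  simp only [hJ]
  exact F.finite_length_le (u.r - u.l)
end

section
/- Every element u of F admits a unique factorization u = (a⁻¹)^m · a^{m+k} · (a⁻¹)^k · t, where m, k ∈ ℕ, -m ≤ p ≤ k, and t = a^p if p ≥ 0 while t = (a⁻¹)^{-p} if p < 0; explicitly, m = -uλ, k = uρ and p = uπ. In particular F is generated as a monoid by {a, a⁻¹}. -/
/-!
Read `u = (uλ, uπ, uρ)` as a walk on `ℤ` from `0` to `uπ` whose leftmost and rightmost visited
points are `uλ` and `uρ`; multiplication concatenates walks. The word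
`(a⁻¹)^m · a^(m+k) · (a⁻¹)^k · t` walks to `-m`, then to `k`, then back to `0`, and finally
straight to `p`. When `-m ≤ p ≤ k` the last leg stays inside `[-m, k]`, so the word has value
`(-m, p, k)` (`normalForm_l`, `normalForm_p`, `normalForm_r`). Existence and uniqueness of the
factorization are then read off coordinatewise, and generation follows from existence.
-/

open Pointwise

namespace F

theorem a_pow_coords (n : ℕ) : (a ^ n).l = 0 ∧ (a ^ n).p = n ∧ (a ^ n).r = n := by
  induction n with
  | zero => simp
  | succ n ih =>
    obtain ⟨h1, h2, h3⟩ := ih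
    rw [pow_succ, mul_l, mul_p, mul_r, h1, h2, h3]
    simp only [a]
    push_cast
    omega

theorem ainv_pow_coords (n : ℕ) :
    (ainv ^ n).l = -n ∧ (ainv ^ n).p = -n ∧ (ainv ^ n).r = 0 := by
  induction n with
  | zero => simp
  | succ n ih =>
    obtain ⟨h1, h2, h3⟩ := ih
    rw [pow_succ, mul_l, mul_p, mul_r, h1, h2, h3]
    simp only [ainv]
    push_cast
    omega

/-- The straight walk from `0` to `p`: `a^p` if `p ≥ 0` and `(a⁻¹)^(-p)` if `p < 0`. -/
def tail (p : ℤ) : F := if 0 ≤ p then a ^ p.toNat else ainv ^ (-p).toNat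

theorem tail_coords (p : ℤ) :
    (tail p).l = min 0 p ∧ (tail p).p = p ∧ (tail p).r = max 0 p := by
  unfold tail
  split_ifs with h
  · obtain ⟨h1, h2, h3⟩ := a_pow_coords p.toNat
    rw [h1, h2, h3]
    omega
  · obtain ⟨h1, h2, h3⟩ := ainv_pow_coords (-p).toNat
    rw [h1, h2, h3]
    omega

/-- The word `(a⁻¹)^m · a^(m+k) · (a⁻¹)^k · t`, where `t` is the straight walk to `p`. -/
def normalForm (m k : ℕ) (p : ℤ) : F :=
  ainv ^ m * a ^ (m + k) * ainv ^ k * tail p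

theorem normalForm_l {m k : ℕ} {p : ℤ} (h : -(m : ℤ) ≤ p) : (normalForm m k p).l = -m := by
  simp only [normalForm, mul_l, mul_p, a_pow_coords, ainv_pow_coords, tail_coords]
  push_cast
  omega

theorem normalForm_p (m k : ℕ) (p : ℤ) : (normalForm m k p).p = p := by
  simp only [normalForm, mul_p, a_pow_coords, ainv_pow_coords, tail_coords]
  push_cast
  omega

theorem normalForm_r {m k : ℕ} {p : ℤ} (h : p ≤ k) : (normalForm m k p).r = k := by
  simp only [normalForm, mul_r, mul_p, a_pow_coords, ainv_pow_coords, tail_coords]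
  push_cast
  omega

theorem coords_bounds (u : F) :
    -(((-u.l).toNat : ℕ) : ℤ) ≤ u.p ∧ u.p ≤ ((u.r.toNat : ℕ) : ℤ) := by
  have := u.hl
  have := u.hr
  have := u.hlp
  have := u.hpr
  omega

theorem eq_normalForm (u : F) : u = normalForm (-u.l).toNat u.r.toNat u.p := by
  obtain ⟨h1, h2⟩ := coords_bounds u
  have := u.hl
  have := u.hr
  ext
  · rw [normalForm_l h1]; omega
  · rw [normalForm_p]
  · rw [normalForm_r h2]; omega

theorem normalForm_mem_closure (m k : ℕ) (p : ℤ) :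
    normalForm m k p ∈ Submonoid.closure {a, ainv} := by
  have ha : a ∈ Submonoid.closure {a, ainv} := Submonoid.subset_closure (by simp)
  have hb : ainv ∈ Submonoid.closure {a, ainv} := Submonoid.subset_closure (by simp)
  have ht : tail p ∈ Submonoid.closure {a, ainv} := by
    unfold tail
    split_ifs
    · exact pow_mem ha _
    · exact pow_mem hb _
  exact mul_mem (mul_mem (mul_mem (pow_mem hb _) (pow_mem ha _)) (pow_mem hb _)) ht

end F

/-- Every `u ∈ F` admits a unique factorization
`u = (a⁻¹)^m · a^(m+k) · (a⁻¹)^k · t` where `m, k ∈ ℕ`, `-m ≤ p ≤ k`, and `t = a^p` if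
`p ≥ 0`, `t = (a⁻¹)^(-p)` if `p < 0`; explicitly `m = -uλ`, `k = uρ` and `p = uπ`.
In particular `F` is generated as a monoid by `{a, a⁻¹}`. -/
theorem unique_factorization_and_generated :
    (∀ u : F, ∃! w : ℕ × ℕ × ℤ,
      (-(w.1 : ℤ) ≤ w.2.2 ∧ w.2.2 ≤ (w.2.1 : ℤ)) ∧
      u = F.ainv ^ w.1 * F.a ^ (w.1 + w.2.1) * F.ainv ^ w.2.1 *
          (if 0 ≤ w.2.2 then F.a ^ w.2.2.toNat else F.ainv ^ (-w.2.2).toNat)) ∧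
    (∀ u : F,
      (-(((-u.l).toNat : ℕ) : ℤ) ≤ u.p ∧ u.p ≤ ((u.r.toNat : ℕ) : ℤ)) ∧
      u = F.ainv ^ (-u.l).toNat * F.a ^ ((-u.l).toNat + u.r.toNat) * F.ainv ^ u.r.toNat *
          (if 0 ≤ u.p then F.a ^ u.p.toNat else F.ainv ^ (-u.p).toNat)) ∧
    Submonoid.closure {F.a, F.ainv} = (⊤ : Submonoid F) := by
  refine ⟨fun u => ⟨((-u.l).toNat, u.r.toNat, u.p), ⟨F.coords_bounds u, F.eq_normalForm u⟩, ?_⟩,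
    fun u => ⟨F.coords_bounds u, F.eq_normalForm u⟩, ?_⟩
  · rintro ⟨m, k, p⟩ ⟨⟨h1, h2⟩, h⟩
    change u = F.normalForm m k p at h
    dsimp only at h1 h2
    rw [h, F.normalForm_l h1, F.normalForm_p, F.normalForm_r h2]
    simp
  · refine eq_top_iff.mpr fun u _ => ?_
    rw [F.eq_normalForm u]
    exact F.normalForm_mem_closure _ _ _
end

section
/- Let L be a rational subset of F and let n' ≥ n ≥ 1 satisfy the cut-and-paste property for L, namely: for every i ∈ {1,2,3} and every u ∈ G_{n',i}, u ∈ L iff ξ_{n,i}(u) ∈ L. Then for every integer k > 1 and every n'' ≥ n' + kn, the pair (kn, n'') also satisfies the cut-and-paste property for L: for every i ∈ {1,2,3} and every u ∈ G_{n'',i}, u ∈ L iff ξ_{kn,i}(u) ∈ L. -/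
/-!
Applying `ξ_{kn,i}` amounts to applying `ξ_{n,i}` successively `k` times. Each application lowers
the quantity `-uλ`, `uπ` or `uρ - uπ` that defines `G_{·,i}` by exactly `n`. An element of
`G_{n'+kn,i}` therefore stays in `G_{n',i}` before each of the `k` steps, and the property for
`(n, n')` preserves membership in `L` at every step.
-/

open Pointwise

/-- The cut-and-paste property for a subset `L ⊆ F` and parameters `n, n'`: for every
`i ∈ {1,2,3}` and every `u ∈ G_{n',i}`, `u ∈ L ↔ ξ_{n,i}(u) ∈ L` (the image `ξ_{n,i}(u)`
is specified through its components). -/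
def CutPaste (L : Set F) (n n' : ℤ) : Prop :=
  (∀ u v : F, 0 ≤ u.p → u.l ≤ -n' →
    v.l = u.l + n → v.p = u.p → v.r = u.r → (u ∈ L ↔ v ∈ L)) ∧
  (∀ u v : F, n' ≤ u.p →
    v.l = u.l → v.p = u.p - n → v.r = u.r - n → (u ∈ L ↔ v ∈ L)) ∧
  (∀ u v : F, 0 ≤ u.p → n' ≤ u.r - u.p →
    v.l = u.l → v.p = u.p → v.r = u.r - n → (u ∈ L ↔ v ∈ L))

/-- The iterated property, by induction on the number `m` of cuts. -/
theorem CutPaste.nat_mul {L : Set F} {n n' : ℤ} (hn : 1 ≤ n) (hnn' : n ≤ n')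
    (h : CutPaste L n n') (m : ℕ) : CutPaste L (m * n) (n' + m * n) := by
  induction m with
  | zero =>
    have key : ∀ u v : F, v.l = u.l → v.p = u.p → v.r = u.r → (u ∈ L ↔ v ∈ L) := by
      intro u v hl hp hr
      rw [F.ext hl hp hr]
    refine ⟨fun u v _ _ h1 h2 h3 => key u v ?_ ?_ ?_, fun u v _ h1 h2 h3 => key u v ?_ ?_ ?_,
      fun u v _ _ h1 h2 h3 => key u v ?_ ?_ ?_⟩ <;> simp_all
  | succ m ih =>
    obtain ⟨h1, h2, h3⟩ := h
    obtain ⟨i1, i2, i3⟩ := ih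
    have hm : 0 ≤ (m : ℤ) * n := by positivity
    have e : ((m + 1 : ℕ) : ℤ) * n = m * n + n := by push_cast; ring
    rw [e]
    generalize (m : ℤ) * n = t at *
    -- In each case the witness `w` is the result of the first of the `m + 1` cuts.
    refine ⟨?_, ?_, ?_⟩
    · intro u v hp hc e1 e2 e3
      let w : F := ⟨u.l + n, u.p, u.r, by omega, u.hr, by omega, u.hpr⟩
      exact (h1 u w hp (by omega) rfl rfl rfl).trans
        (i1 w v hp (by simp only [w]; omega) (by simp only [w]; omega) e2 e3)
    · intro u v hc e1 e2 e3
      have := u.hl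
      have := u.hpr
      let w : F := ⟨u.l, u.p - n, u.r - n, by omega, by omega, by omega, by omega⟩
      exact (h2 u w (by omega) rfl rfl rfl).trans
        (i2 w v (by simp only [w]; omega) e1 (by simp only [w]; omega) (by simp only [w]; omega))
    · intro u v hp hc e1 e2 e3
      let w : F := ⟨u.l, u.p, u.r - n, u.hl, by omega, u.hlp, by omega⟩
      exact (h3 u w hp (by omega) rfl rfl rfl).trans
        (i3 w v hp (by simp only [w]; omega) e1 e2 (by simp only [w]; omega))

/-- If `L` is a rational subset of `F` and `n' ≥ n ≥ 1` satisfy the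
cut-and-paste property for `L`, then for every integer `k > 1` and every `n'' ≥ n' + kn`,
the pair `(kn, n'')` also satisfies the cut-and-paste property for `L`. -/
theorem cut_and_paste_multiple (L : Set F) (hL : F.IsRat L) (n n' : ℤ)
    (hn : 1 ≤ n) (hnn' : n ≤ n') (h : CutPaste L n n')
    (k : ℤ) (hk : 1 < k) (n'' : ℤ) (hn'' : n' + k * n ≤ n'') :
    CutPaste L (k * n) n'' := by
  lift k to ℕ using by omega
  obtain ⟨h1, h2, h3⟩ := h.nat_mul hn hnn' k
  -- Raising the threshold from `n' + kn` to `n''` only shrinks the sets `G_{·,i}`.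
  exact ⟨fun u v hp hc => h1 u v hp (by omega), fun u v hc => h2 u v (by omega),
    fun u v hp hc => h3 u v hp (by omega)⟩
end

section
/- Let L be a rational subset of F. Then there exist integers n' ≥ n ≥ 1 such that, writing ζ = ζ_{n,n'}: (i) ζ(L⁺) = L ∩ W_{n'} and L⁺ = {u ∈ F⁺ : ζ(u) ∈ L ∩ W_{n'}}; (ii) ζ((L⁻)⁻¹) = L⁻¹ ∩ W_{n'} and L⁻ = {u ∈ F⁻ : ζ(u⁻¹) ∈ L⁻¹ ∩ W_{n'}}. -/
/-!
A finite automaton reading words over `{a, a⁻¹}` (with silent moves) accepts `u ∈ F` exactly when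
it has a run whose trace, seen as a walk on `ℤ`, starts at `0`, ends at `uπ` and has range exactly
`[uλ, uρ]`. Rational sets are the sets accepted this way (`IsRat.accepted`).

Cut the range `[uλ, uρ]` at `0` and `uπ` into three segments. A run inside the range is a
concatenation of runs each staying inside one segment and joining cut points, so whether such a
run exists depends on each segment only through its *behaviour*: the finite relation telling which
(end, state) pairs are joined by a run inside the segment (`glue`, `reach_transfer`). That the
range is attained is expressed by making the walk visit both of its extremities (`touch`).

The behaviour of a segment of length `m + 1` is determined by that of a segment of length `m`, and
there are finitely many behaviours, so the behaviour is an ultimately periodic function of the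
length: for some `t` and `n`, lengths `≥ t` congruent mod `n` have equal behaviours. Taking
`n' = t + n`, the map `η` preserves behaviours of lengths, hence `ζ` preserves membership in `L`.
The lengths of the segments are `-uλ, uπ, uρ - uπ` when `uπ ≥ 0`; when `uπ ≤ 0` they are the same
quantities for `u⁻¹`, so the same `n` and `n'` serve both halves of the statement.
-/

open Pointwise

/-- The specification of the map `η_{n,n'} : ℤ → ℤ`:
`η(m) = m` if `0 ≤ m < n'`; `η(m) = max{i : 0 ≤ i ≤ n'-1, i ≡ m (mod n)}` if `m ≥ n'`;
and `η(-m) = -η(m)` for `m ≥ 0`. -/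
def EtaSpec (n n' : ℤ) (η : ℤ → ℤ) : Prop :=
  (∀ m : ℤ, 0 ≤ m → m < n' → η m = m) ∧
  (∀ m : ℤ, n' ≤ m → IsGreatest {i : ℤ | 0 ≤ i ∧ i ≤ n' - 1 ∧ i ≡ m [ZMOD n]} (η m)) ∧
  (∀ m : ℤ, 0 ≤ m → η (-m) = -η m)

/-- `v = ζ_{n,n'}(u)`, expressed through components: `vλ = η(uλ)`, `vπ = η(uπ)` and
`vρ - vπ = η(uρ - uπ)` (for `u ∈ F⁺`, where `η` satisfies `EtaSpec`). -/
def ZetaRel (η : ℤ → ℤ) (u v : F) : Prop :=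
  v.l = η u.l ∧ v.p = η u.p ∧ v.r - v.p = η (u.r - u.p)

/-- Membership in `W_{n'} = {u ∈ F : uλ > -n', 0 ≤ uπ < n', uρ - uπ < n'}`. -/
def InW (n' : ℤ) (u : F) : Prop :=
  -n' < u.l ∧ 0 ≤ u.p ∧ u.p < n' ∧ u.r - u.p < n'

namespace F

/-! ### Automata over `F` -/

/-- `Path E q u q'`: in the graph `E` with edges labelled in `F` there is a path from `q` to `q'`
whose labels multiply to `u`. -/
inductive Path {Q : Type} (E : Q → F → Q → Prop) : Q → F → Q → Prop
  | nil (q : Q) : Path E q 1 q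
  | snoc {q q' r : Q} {u g : F} : Path E q u q' → E q' g r → Path E q (u * g) r

/-- All labels of `E` are `a`, `a⁻¹` or `1`, the label `1` being that of a silent move. -/
def Letters {Q : Type} (E : Q → F → Q → Prop) : Prop :=
  ∀ q g q', E q g q' → g = 1 ∨ g = a ∨ g = ainv

/-- `L` is the set of labels of paths from an initial state in `I` to a final state in `A`, in some
finite automaton with labels `a`, `a⁻¹`, `1`. -/
def Accepted (L : Set F) : Prop :=
  ∃ (Q : Type) (E : Q → F → Q → Prop) (I A : Set Q), Finite Q ∧ Letters E ∧
    ∀ u, u ∈ L ↔ ∃ i ∈ I, ∃ f ∈ A, Path E i u f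

theorem Path.single {Q : Type} {E : Q → F → Q → Prop} {q q' : Q} {g : F} (h : E q g q') :
    Path E q g q' := by
  simpa using (Path.nil q).snoc h

theorem Path.trans {Q : Type} {E : Q → F → Q → Prop} {q q' q'' : Q} {u v : F}
    (h : Path E q u q') (h' : Path E q' v q'') : Path E q (u * v) q'' := by
  induction h' with
  | nil => simpa using h
  | snoc _ e ih => rw [← mul_assoc]; exact ih.snoc e

theorem Path.map {Q Q' : Type} {E : Q → F → Q → Prop} {E' : Q' → F → Q' → Prop} (φ : Q → Q')
    (hφ : ∀ q g q', E q g q' → E' (φ q) g (φ q')) {q q' : Q} {u : F} (h : Path E q u q') :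
    Path E' (φ q) u (φ q') := by
  induction h with
  | nil => exact .nil _
  | snoc _ e ih => exact ih.snoc (hφ _ _ _ e)

theorem accepted_empty : Accepted ∅ :=
  ⟨Empty, fun _ _ _ => False, ∅, ∅, inferInstance, fun _ _ _ h => h.elim, by simp⟩

theorem accepted_letter (g : F) (hg : g = 1 ∨ g = a ∨ g = ainv) : Accepted {g} := by
  refine ⟨Bool, fun q h q' => q = false ∧ q' = true ∧ h = g, {false}, {true}, inferInstance, ?_, ?_⟩
  · rintro q h q' ⟨-, -, rfl⟩
    exact hg
  · intro u
    constructor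
    · rintro rfl
      exact ⟨false, rfl, true, rfl, Path.single ⟨rfl, rfl, rfl⟩⟩
    · rintro ⟨i, rfl, f, rfl, h⟩
      have key : ∀ q u q', Path (fun q h q' => q = false ∧ q' = true ∧ h = g) q u q' →
          q = false → (u = 1 ∧ q' = false) ∨ (u = g ∧ q' = true) := by
        intro q u q' h
        induction h with
        | nil => intro h; exact .inl ⟨rfl, h⟩
        | snoc _ e ih =>
          intro hq
          obtain ⟨e1, e2, rfl⟩ := e
          rcases ih hq with ⟨rfl, -⟩ | ⟨-, h3⟩
          · exact .inr ⟨one_mul _, e2⟩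
          · rw [h3] at e1; cases e1
      rcases key _ _ _ h rfl with ⟨-, h⟩ | ⟨h, -⟩
      · cases h
      · exact h

/-- Disjoint union of two labelled graphs, with an additional silent move from `q` to `q'` whenever
`J q q'`. -/
def sumE {Q R : Type} (E : Q → F → Q → Prop) (E' : R → F → R → Prop) (J : Q → R → Prop) :
    Q ⊕ R → F → Q ⊕ R → Prop
  | .inl q, g, .inl q' => E q g q'
  | .inr q, g, .inr q' => E' q g q'
  | .inl q, g, .inr q' => g = 1 ∧ J q q'
  | .inr _, _, .inl _ => False

section Sum
variable {Q R : Type} {E : Q → F → Q → Prop} {E' : R → F → R → Prop} {J : Q → R → Prop}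

theorem sumE_letters (h : Letters E) (h' : Letters E') : Letters (sumE E E' J) := by
  rintro (q | q) g (q' | q') e
  · exact h _ _ _ e
  · exact .inl e.1
  · exact e.elim
  · exact h' _ _ _ e

theorem path_sum_inr {q : R} {u : F} {x : Q ⊕ R} (h : Path (sumE E E' J) (.inr q) u x) :
    ∃ q', x = .inr q' ∧ Path E' q u q' := by
  induction h with
  | nil => exact ⟨q, rfl, .nil _⟩
  | @snoc _ x _ _ _ e ih =>
    obtain ⟨q', rfl, hp⟩ := ih
    rcases x with x | x
    · exact e.elim
    · exact ⟨x, rfl, hp.snoc e⟩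

theorem path_sum_inl {q : Q} {u : F} {x : Q ⊕ R} (h : Path (sumE E E' J) (.inl q) u x) :
    (∃ q', x = .inl q' ∧ Path E q u q') ∨
      ∃ q' r r' v w, x = .inr r' ∧ Path E q v q' ∧ J q' r ∧ Path E' r w r' ∧ u = v * w := by
  induction h with
  | nil => exact .inl ⟨q, rfl, .nil _⟩
  | @snoc _ x _ _ _ e ih =>
    rcases ih with ⟨q', rfl, hp⟩ | ⟨q', r, r', v, w, rfl, h1, h2, h3, rfl⟩
    · rcases x with x | x
      · exact .inl ⟨x, rfl, hp.snoc e⟩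
      · obtain ⟨rfl, e⟩ := e
        exact .inr ⟨q', x, x, _, 1, rfl, hp, e, .nil _, rfl⟩
    · rcases x with x | x
      · exact e.elim
      · exact .inr ⟨q', r, x, v, _, rfl, h1, h2, h3.snoc e, mul_assoc _ _ _⟩

end Sum

theorem Accepted.union {S T : Set F} (hS : Accepted S) (hT : Accepted T) : Accepted (S ∪ T) := by
  obtain ⟨Q, E, I, A, hQ, hE, h⟩ := hS
  obtain ⟨R, E', I', A', hR, hE', h'⟩ := hT
  refine ⟨Q ⊕ R, sumE E E' fun _ _ => False, Sum.inl '' I ∪ Sum.inr '' I',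
    Sum.inl '' A ∪ Sum.inr '' A', inferInstance, sumE_letters hE hE', fun u => ?_⟩
  rw [Set.mem_union, h, h']
  constructor
  · rintro (⟨i, hi, f, hf, hp⟩ | ⟨i, hi, f, hf, hp⟩)
    · exact ⟨_, .inl ⟨i, hi, rfl⟩, _, .inl ⟨f, hf, rfl⟩, hp.map Sum.inl fun _ _ _ e => e⟩
    · exact ⟨_, .inr ⟨i, hi, rfl⟩, _, .inr ⟨f, hf, rfl⟩, hp.map Sum.inr fun _ _ _ e => e⟩
  · rintro ⟨_, ⟨i, hi, rfl⟩ | ⟨i, hi, rfl⟩, f, hf, hp⟩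
    · rcases path_sum_inl hp with ⟨q', rfl, hp'⟩ | ⟨_, _, _, _, _, _, _, hJ, _⟩
      · refine .inl ⟨i, hi, q', ?_, hp'⟩
        simpa using hf
      · exact hJ.elim
    · obtain ⟨q', rfl, hp'⟩ := path_sum_inr hp
      refine .inr ⟨i, hi, q', ?_, hp'⟩
      simpa using hf

theorem Accepted.mul {S T : Set F} (hS : Accepted S) (hT : Accepted T) : Accepted (S * T) := by
  obtain ⟨Q, E, I, A, hQ, hE, h⟩ := hS
  obtain ⟨R, E', I', A', hR, hE', h'⟩ := hT
  refine ⟨Q ⊕ R, sumE E E' fun q r => q ∈ A ∧ r ∈ I', Sum.inl '' I, Sum.inr '' A', inferInstance,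
    sumE_letters hE hE', fun u => ?_⟩
  rw [Set.mem_mul]
  constructor
  · rintro ⟨v, hv, w, hw, rfl⟩
    obtain ⟨i, hi, f, hf, hp⟩ := (h v).1 hv
    obtain ⟨i', hi', f', hf', hp'⟩ := (h' w).1 hw
    refine ⟨_, ⟨i, hi, rfl⟩, _, ⟨f', hf', rfl⟩, ?_⟩
    have h1 : Path (sumE E E' fun q r => q ∈ A ∧ r ∈ I') (.inl i) v (.inl f) :=
      hp.map Sum.inl fun _ _ _ e => e
    have h2 : Path (sumE E E' fun q r => q ∈ A ∧ r ∈ I') (.inr i') w (.inr f') :=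
      hp'.map Sum.inr fun _ _ _ e => e
    have h3 : Path (sumE E E' fun q r => q ∈ A ∧ r ∈ I') (.inl f) 1 (.inr i') :=
      Path.single ⟨rfl, hf, hi'⟩
    simpa using (h1.trans h3).trans h2
  · rintro ⟨_, ⟨i, hi, rfl⟩, _, ⟨f, hf, rfl⟩, hp⟩
    rcases path_sum_inl hp with ⟨q', hx, -⟩ | ⟨q', r, r', v, w, hx, h1, h2, h3, rfl⟩
    · cases hx
    · cases hx
      exact ⟨v, (h v).2 ⟨i, hi, q', h2.1, h1⟩, w, (h' w).2 ⟨r, h2.2, f, hf, h3⟩, rfl⟩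

/-- The graph `E` with a new state `none`, silent moves from `none` to the states of `I` and silent
moves from the states of `A` to `none`. -/
def starE {Q : Type} (E : Q → F → Q → Prop) (I A : Set Q) : Option Q → F → Option Q → Prop
  | some q, g, some q' => E q g q'
  | none, g, some q => g = 1 ∧ q ∈ I
  | some q, g, none => g = 1 ∧ q ∈ A
  | none, _, none => False

theorem Accepted.star {S : Set F} (hS : Accepted S) : Accepted (⋃ k : ℕ, S ^ k) := by
  obtain ⟨Q, E, I, A, hQ, hE, h⟩ := hS
  refine ⟨Option Q, starE E I A, {none}, {none}, inferInstance, ?_, fun u => ?_⟩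
  · rintro (_ | q) g (_ | q') e
    · exact e.elim
    · exact .inl e.1
    · exact .inl e.1
    · exact hE _ _ _ e
  rw [Set.mem_iUnion]
  constructor
  · rintro ⟨k, hk⟩
    refine ⟨none, rfl, none, rfl, ?_⟩
    induction k generalizing u with
    | zero =>
      rw [pow_zero, Set.mem_one] at hk
      rw [hk]; exact .nil _
    | succ k ih =>
      rw [pow_succ, Set.mem_mul] at hk
      obtain ⟨v, hv, w, hw, rfl⟩ := hk
      obtain ⟨i, hi, f, hf, hp⟩ := (h w).1 hw
      have h1 : Path (starE E I A) none 1 (some i) := Path.single ⟨rfl, hi⟩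
      have h2 : Path (starE E I A) (some i) w (some f) := hp.map some fun _ _ _ e => e
      have h3 : Path (starE E I A) (some f) 1 none := Path.single ⟨rfl, hf⟩
      simpa using (ih v hv).trans ((h1.trans h2).trans h3)
  · rintro ⟨i, hi, f, hf, hp⟩
    have hi : i = none := hi
    have hf : f = none := hf
    -- A path leaving `none` is a sequence of loops, each with label in `S`, possibly followed by a
    -- path in `E` issued from `I`.
    have key : ∀ x u y, Path (starE E I A) x u y → x = none →
        (y = none → ∃ k, u ∈ S ^ k) ∧
        ∀ q, y = some q → ∃ k, ∃ v ∈ S ^ k, ∃ i ∈ I, ∃ w, Path E i w q ∧ u = v * w := by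
      intro x u y hp
      induction hp with
      | nil =>
        rintro rfl
        refine ⟨fun _ => ⟨0, ?_⟩, fun q hq => by cases hq⟩
        rw [pow_zero, Set.mem_one]
      | @snoc y z u g _ e ih =>
        intro hx
        obtain ⟨ih1, ih2⟩ := ih hx
        rcases y with _ | y <;> rcases z with _ | z
        · exact e.elim
        · obtain ⟨rfl, hz⟩ := e
          obtain ⟨k, hk⟩ := ih1 rfl
          refine ⟨fun h => (by cases h), fun q hq => ?_⟩
          cases hq
          exact ⟨k, u, hk, z, hz, 1, .nil _, rfl⟩
        · obtain ⟨rfl, hy⟩ := e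
          obtain ⟨k, v, hv, i, hi, w, hw, rfl⟩ := ih2 y rfl
          refine ⟨fun _ => ⟨k + 1, ?_⟩, fun q hq => by cases hq⟩
          rw [pow_succ, mul_one]
          exact Set.mul_mem_mul hv ((h w).2 ⟨i, hi, y, hy, hw⟩)
        · obtain ⟨k, v, hv, i, hi, w, hw, rfl⟩ := ih2 y rfl
          refine ⟨fun h => (by cases h), fun q hq => ?_⟩
          cases hq
          exact ⟨k, v, hv, i, hi, w * g, hw.snoc e, mul_assoc _ _ _⟩
    exact (key _ _ _ hp hi).1 hf

theorem accepted_pow {g : F} (hg : Accepted {g}) (k : ℕ) : Accepted {g ^ k} := by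
  induction k with
  | zero => simpa using accepted_letter 1 (.inl rfl)
  | succ k ih =>
    rw [pow_succ, ← Set.singleton_mul_singleton]
    exact ih.mul hg

theorem a_pow (k : ℕ) : (a ^ k).l = 0 ∧ (a ^ k).p = k ∧ (a ^ k).r = k := by
  induction k with
  | zero => simp
  | succ k ih =>
    obtain ⟨h1, h2, h3⟩ := ih
    have e1 : a.l = 0 := rfl
    have e2 : a.p = 1 := rfl
    have e3 : a.r = 1 := rfl
    rw [pow_succ]
    simp only [mul_l, mul_p, mul_r, h1, h2, h3, e1, e2, e3]
    push_cast
    omega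

theorem ainv_pow (k : ℕ) : (ainv ^ k).l = -k ∧ (ainv ^ k).p = -k ∧ (ainv ^ k).r = 0 := by
  induction k with
  | zero => simp
  | succ k ih =>
    obtain ⟨h1, h2, h3⟩ := ih
    have e1 : ainv.l = -1 := rfl
    have e2 : ainv.p = -1 := rfl
    have e3 : ainv.r = 0 := rfl
    rw [pow_succ]
    simp only [mul_l, mul_p, mul_r, h1, h2, h3, e1, e2, e3]
    push_cast
    omega

theorem accepted_singleton (u : F) : Accepted {u} := by
  have hu := u.hl
  have hu1 := u.hr
  have hu2 := u.hlp
  have hu3 := u.hpr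
  have ha := accepted_letter a (.inr (.inl rfl))
  have hb := accepted_letter ainv (.inr (.inr rfl))
  -- Walk from `0` down to `u.l`, then up to `u.r`, then down to `u.p`.
  have key : u = ainv ^ (-u.l).toNat * a ^ (u.r - u.l).toNat * ainv ^ (u.r - u.p).toNat := by
    obtain ⟨h1, h2, h3⟩ := ainv_pow (-u.l).toNat
    obtain ⟨h4, h5, h6⟩ := a_pow (u.r - u.l).toNat
    obtain ⟨h7, h8, h9⟩ := ainv_pow (u.r - u.p).toNat
    ext <;> simp only [mul_l, mul_p, mul_r, h1, h2, h3, h4, h5, h6, h7, h8, h9] <;> omega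
  rw [key, ← Set.singleton_mul_singleton, ← Set.singleton_mul_singleton]
  exact ((accepted_pow hb _).mul (accepted_pow ha _)).mul (accepted_pow hb _)

theorem IsRat.accepted {L : Set F} (hL : IsRat L) : Accepted L := by
  induction hL with
  | finite S hS =>
    induction S, hS using Set.Finite.induction_on with
    | empty => exact accepted_empty
    | insert _ _ ih =>
      rw [Set.insert_eq]
      exact (accepted_singleton _).union ih
  | union S T _ _ hS hT => exact hS.union hT
  | mul S T _ _ hS hT => exact hS.mul hT
  | star S _ hS => exact hS.star

/-! ### Runs inside an interval -/

/-- `Reach E lo hi i q j q'`: some path from `q` to `q'`, seen as a walk on `ℤ` started at `i`, ends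
at `j` without leaving `[lo, hi]`. -/
def Reach {Q : Type} (E : Q → F → Q → Prop) (lo hi i : ℤ) (q : Q) (j : ℤ) (q' : Q) : Prop :=
  ∃ u, Path E q u q' ∧ i + u.p = j ∧ lo ≤ i + u.l ∧ i + u.r ≤ hi

section Reach
variable {Q : Type} {E : Q → F → Q → Prop}

theorem Reach.mono {lo hi i j lo' hi' : ℤ} {q q' : Q} (h : Reach E lo hi i q j q')
    (hl : lo' ≤ lo) (hh : hi ≤ hi') : Reach E lo' hi' i q j q' := by
  obtain ⟨u, h1, h2, h3, h4⟩ := h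
  exact ⟨u, h1, h2, hl.trans h3, h4.trans hh⟩

theorem Reach.refl {lo hi i : ℤ} (q : Q) (hl : lo ≤ i) (hh : i ≤ hi) : Reach E lo hi i q i q :=
  ⟨1, .nil q, by simp, by simpa, by simpa⟩

theorem Reach.trans {lo hi i j k : ℤ} {q q' q'' : Q} (h : Reach E lo hi i q j q')
    (h' : Reach E lo hi j q' k q'') : Reach E lo hi i q k q'' := by
  obtain ⟨u, h1, h2, h3, h4⟩ := h
  obtain ⟨v, h5, h6, h7, h8⟩ := h'
  refine ⟨u * v, h1.trans h5, ?_, ?_, ?_⟩ <;> simp only [mul_p, mul_l, mul_r] <;> omega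

theorem Reach.shift {lo hi i j : ℤ} {q q' : Q} (h : Reach E lo hi i q j q') (d : ℤ) :
    Reach E (lo + d) (hi + d) (i + d) q (j + d) q' := by
  obtain ⟨u, h1, h2, h3, h4⟩ := h
  exact ⟨u, h1, by omega, by omega, by omega⟩

theorem Reach.edge (hE : Letters E) {lo hi i : ℤ} {q q' : Q} {g : F} (h : E q g q')
    (hl : lo ≤ i) (hl' : lo ≤ i + g.p) (hh : i ≤ hi) (hh' : i + g.p ≤ hi) :
    Reach E lo hi i q (i + g.p) q' := by
  refine ⟨g, .single h, rfl, ?_⟩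
  rcases hE _ _ _ h with rfl | rfl | rfl <;> simp [a, ainv] at * <;> omega

/-- The walk of a path labelled `u` visits both extremities of its range, in one order or the
other. -/
theorem touch (hE : Letters E) {q q' : Q} {u : F} (h : Path E q u q') :
    (∃ q1 q2, Reach E u.l u.r 0 q u.l q1 ∧ Reach E u.l u.r u.l q1 u.r q2 ∧
        Reach E u.l u.r u.r q2 u.p q') ∨
    ∃ q1 q2, Reach E u.l u.r 0 q u.r q1 ∧ Reach E u.l u.r u.r q1 u.l q2 ∧
        Reach E u.l u.r u.l q2 u.p q' := by
  induction h with
  | nil =>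
    have hr : Reach E 0 0 0 q 0 q := Reach.refl q le_rfl le_rfl
    exact .inl ⟨q, q, hr, hr, hr⟩
  | @snoc q' q'' u g _ e ih =>
    have h1 := u.hl
    have h2 := u.hr
    have h3 := u.hlp
    have h4 := u.hpr
    have hg : g.l = min 0 g.p ∧ g.r = max 0 g.p ∧ -1 ≤ g.p ∧ g.p ≤ 1 := by
      rcases hE _ _ _ e with rfl | rfl | rfl <;> simp [a, ainv]
    obtain ⟨hgl, hgr, hg1, hg2⟩ := hg
    have hm : ∀ {i q j q'}, Reach E u.l u.r i q j q' → Reach E (u * g).l (u * g).r i q j q' :=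
      fun h => h.mono (by simp only [mul_l]; omega) (by simp only [mul_r]; omega)
    have he : Reach E (u * g).l (u * g).r u.p q' (u.p + g.p) q'' := by
      apply Reach.edge hE e <;> simp only [mul_l, mul_r] <;> omega
    have hend : Reach E (u * g).l (u * g).r (u.p + g.p) q'' (u.p + g.p) q'' := by
      apply Reach.refl <;> simp only [mul_l, mul_r] <;> omega
    by_cases hA : u.l ≤ u.p + g.p
    · by_cases hB : u.p + g.p ≤ u.r
      · have e1 : (u * g).l = u.l := by simp only [mul_l]; omega
        have e2 : (u * g).r = u.r := by simp only [mul_r]; omega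
        rw [e1, e2] at he ⊢
        rcases ih with ⟨q1, q2, i1, i2, i3⟩ | ⟨q1, q2, i1, i2, i3⟩
        · exact .inl ⟨q1, q2, i1, i2, i3.trans he⟩
        · exact .inr ⟨q1, q2, i1, i2, i3.trans he⟩
      · -- The last step goes beyond the upper extremity, which it turns into the end point.
        have e1 : (u * g).l = u.l := by simp only [mul_l]; omega
        have e2 : (u * g).r = u.p + g.p := by simp only [mul_r]; omega
        left
        rcases ih with ⟨q1, q2, i1, i2, i3⟩ | ⟨q1, q2, i1, i2, i3⟩
        · refine ⟨q1, q'', ?_, ?_, ?_⟩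
          · simpa only [← e1] using hm i1
          · have := (hm i2).trans ((hm i3).trans he)
            simpa only [← e1, ← e2] using this
          · simpa only [← e2, mul_p] using hend
        · refine ⟨q2, q'', ?_, ?_, ?_⟩
          · simpa only [← e1] using (hm i1).trans (hm i2)
          · have := (hm i3).trans he
            simpa only [← e1, ← e2] using this
          · simpa only [← e2, mul_p] using hend
    · have e1 : (u * g).l = u.p + g.p := by simp only [mul_l]; omega
      have e2 : (u * g).r = u.r := by simp only [mul_r]; omega
      right
      rcases ih with ⟨q1, q2, i1, i2, i3⟩ | ⟨q1, q2, i1, i2, i3⟩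
      · refine ⟨q2, q'', ?_, ?_, ?_⟩
        · simpa only [← e2] using (hm i1).trans (hm i2)
        · have := (hm i3).trans he
          simpa only [← e1, ← e2] using this
        · simpa only [← e1, mul_p] using hend
      · refine ⟨q1, q'', ?_, ?_, ?_⟩
        · simpa only [← e2] using hm i1
        · have := (hm i2).trans ((hm i3).trans he)
          simpa only [← e1, ← e2] using this
        · simpa only [← e1, mul_p] using hend

/-- Converse of `touch`: three walks inside `[u.l, u.r]` through both extremities compose to a path
labelled exactly `u`. -/
theorem path_of_touch {q q' : Q} {u : F}
    (h : (∃ q1 q2, Reach E u.l u.r 0 q u.l q1 ∧ Reach E u.l u.r u.l q1 u.r q2 ∧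
        Reach E u.l u.r u.r q2 u.p q') ∨
      ∃ q1 q2, Reach E u.l u.r 0 q u.r q1 ∧ Reach E u.l u.r u.r q1 u.l q2 ∧
        Reach E u.l u.r u.l q2 u.p q') : Path E q u q' := by
  rcases h with ⟨q1, q2, ⟨u1, a1, a2, a3, a4⟩, ⟨u2, b1, b2, b3, b4⟩, ⟨u3, c1, c2, c3, c4⟩⟩ |
    ⟨q1, q2, ⟨u1, a1, a2, a3, a4⟩, ⟨u2, b1, b2, b3, b4⟩, ⟨u3, c1, c2, c3, c4⟩⟩
  all_goals
    have key : u = u1 * u2 * u3 := by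
      have := u1.hlp
      have := u2.hlp
      have := u3.hl
      have := u1.hpr
      have := u2.hpr
      have := u3.hr
      ext <;> simp only [mul_l, mul_p, mul_r] <;> omega
    rw [key]
    exact (a1.trans b1).trans c1

/-! ### Gluing segments -/

theorem exists_seg (c : ℕ → ℤ) {N : ℕ} {j : ℤ} (h0 : c 0 ≤ j) (hN : j < c N) :
    ∃ s < N, c s ≤ j ∧ j < c (s + 1) := by
  induction N with
  | zero => omega
  | succ N ih =>
    by_cases h : j < c N
    · obtain ⟨s, hs, h1⟩ := ih h
      exact ⟨s, by omega, h1⟩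
    · exact ⟨N, by omega, by omega, hN⟩

/-- Let `[c 0, c N]` be cut into segments at the points `c m`, and let `Good` be a set of pairs
(cut point, state) which is closed under walks inside one segment joining its ends. Then `Good` is
closed under walks inside `[c 0, c N]` joining cut points. Segments may be reduced to a point. -/
theorem glue (hE : Letters E) {c : ℕ → ℤ} (hc : Monotone c) {N : ℕ} {Good : ℕ → Q → Prop}
    (hG : ∀ s < N, ∀ e e' q q', (e = s ∨ e = s + 1) → (e' = s ∨ e' = s + 1) → Good e q →
      Reach E (c s) (c (s + 1)) (c e) q (c e') q' → Good e' q')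
    {k k' : ℕ} (hk : k ≤ N) (hk' : k' ≤ N) (hN : 0 < N) {q q' : Q} (h : Good k q)
    (hr : Reach E (c 0) (c N) (c k) q (c k') q') : Good k' q' := by
  have zero_up : ∀ m m' q, m ≤ m' → m' ≤ N → c m = c m' → (Good m q ↔ Good m' q) := by
    intro m m' q hm
    induction m', hm using Nat.le_induction with
    | base => intros; rfl
    | succ m' hm ih =>
      intro h1 h2
      have h3 := hc hm
      have h4 := hc (Nat.le_succ m')
      have h5 : c m' = c (m' + 1) := by simp only [Nat.succ_eq_add_one] at h4; omega
      rw [ih (by omega) (by omega)]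
      constructor
      · intro h
        refine hG m' (by omega) m' (m' + 1) q q (.inl rfl) (.inr rfl) h ?_
        rw [← h5]; exact .refl q le_rfl le_rfl
      · intro h
        refine hG m' (by omega) (m' + 1) m' q q (.inr rfl) (.inl rfl) h ?_
        rw [← h5]; exact .refl q le_rfl le_rfl
  let Inv : ℤ → Q → Prop := fun j q' => ∀ s < N, c s ≤ j → j ≤ c (s + 1) →
    ∃ e q1, (e = s ∨ e = s + 1) ∧ Good e q1 ∧ Reach E (c s) (c (s + 1)) (c e) q1 j q'
  have inv_of_good : ∀ m q, m ≤ N → Good m q → Inv (c m) q := by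
    intro m q hm hg s hs h1 h2
    by_cases hsm : s + 1 ≤ m
    · have h3 := hc hsm
      have h4 : c (s + 1) = c m := by omega
      refine ⟨s + 1, q, .inr rfl, (zero_up _ _ _ hsm hm h4).2 hg, ?_⟩
      rw [h4]; exact .refl q h1 le_rfl
    · have h3 : c m ≤ c s := hc (by omega)
      have h4 : c m = c s := by omega
      refine ⟨s, q, .inl rfl, (zero_up _ _ _ (by omega) (by omega) h4).1 hg, ?_⟩
      rw [← h4]; exact .refl q le_rfl h2
  have key : ∀ q u q', Path E q u q' → Good k q → c 0 ≤ c k + u.l → c k + u.r ≤ c N →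
      Inv (c k + u.p) q' := by
    intro q u q' hp
    induction hp with
    | nil =>
      intro hg _ _
      simpa using inv_of_good k q hk hg
    | @snoc q' q'' u g hp e ih =>
      intro hg h1 h2
      simp only [mul_l, mul_r, mul_p] at h1 h2 ⊢
      have hu1 := u.hlp
      have hu2 := u.hpr
      have ih := ih hg (by omega) (by omega)
      have hgl := g.hlp
      have hgr := g.hpr
      have hg3 : -1 ≤ g.p ∧ g.p ≤ 1 := by
        rcases hE _ _ _ e with rfl | rfl | rfl <;> simp [a, ainv]
      -- A segment containing both ends of the last step.
      obtain ⟨s0, hs0, b1, b2, b3, b4⟩ : ∃ s0 < N, c s0 ≤ c k + u.p ∧ c k + u.p ≤ c (s0 + 1) ∧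
          c s0 ≤ c k + (u.p + g.p) ∧ c k + (u.p + g.p) ≤ c (s0 + 1) := by
        rcases lt_trichotomy g.p 0 with hgp | hgp | hgp
        · obtain ⟨s, hs, d1, d2⟩ := exists_seg c (N := N) (j := c k + (u.p + g.p))
            (by omega) (by omega)
          exact ⟨s, hs, by omega, by omega, by omega, by omega⟩
        · by_cases hlt : c k + u.p < c N
          · obtain ⟨s, hs, d1, d2⟩ := exists_seg c (N := N) (j := c k + u.p)
              (by omega) (by omega)
            exact ⟨s, hs, by omega, by omega, by omega, by omega⟩
          · have d1 := hc (Nat.sub_le N 1)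
            have d2 : N - 1 + 1 = N := by omega
            exact ⟨N - 1, by omega, by omega, by rw [d2]; omega, by omega, by rw [d2]; omega⟩
        · obtain ⟨s, hs, d1, d2⟩ := exists_seg c (N := N) (j := c k + u.p)
            (by omega) (by omega)
          exact ⟨s, hs, by omega, by omega, by omega, by omega⟩
      obtain ⟨e0, q1, he0, hgood, hreach⟩ := ih s0 hs0 b1 b2
      have hreach : Reach E (c s0) (c (s0 + 1)) (c e0) q1 (c k + (u.p + g.p)) q'' := by
        have := hreach.trans (Reach.edge hE e b1 (by omega) b2 (by omega))
        rwa [add_assoc] at this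
      intro s hs f1 f2
      rcases lt_trichotomy s s0 with hlt | rfl | hlt
      · have f3 := hc (show s + 1 ≤ s0 by omega)
        have f4 : c k + (u.p + g.p) = c s0 := by omega
        rw [f4] at hreach f1 f2 ⊢
        exact inv_of_good s0 q'' hs0.le
          (hG s0 hs0 e0 s0 q1 q'' he0 (.inl rfl) hgood hreach) s hs f1 f2
      · exact ⟨e0, q1, he0, hgood, hreach⟩
      · have f3 := hc (show s0 + 1 ≤ s by omega)
        have f4 : c k + (u.p + g.p) = c (s0 + 1) := by omega
        rw [f4] at hreach f1 f2 ⊢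
        exact inv_of_good (s0 + 1) q'' hs0
          (hG s0 hs0 e0 (s0 + 1) q1 q'' he0 (.inr rfl) hgood hreach) s hs f1 f2
  obtain ⟨u, h1, h2, h3, h4⟩ := hr
  have hinv := key q u q' h1 h h3 h4
  rw [h2] at hinv
  by_cases hkN : k' < N
  · obtain ⟨e, q1, he, hg, hr⟩ := hinv k' hkN le_rfl (hc (Nat.le_succ k'))
    exact hG k' hkN e k' q1 q' he (.inl rfl) hg hr
  · obtain ⟨m, rfl⟩ : ∃ m, k' = m + 1 := ⟨k' - 1, by omega⟩
    obtain ⟨e, q1, he, hg, hr⟩ := hinv m (by omega) (hc (Nat.le_succ m)) le_rfl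
    exact hG m (by omega) e (m + 1) q1 q' he (.inr rfl) hg hr

/-- The behaviour of a segment of length `m`: which pairs (end, state) are joined by a walk inside
the segment. The end is `false` for the left one and `true` for the right one. -/
def Beh (E : Q → F → Q → Prop) (m : ℤ) : Bool → Q → Bool → Q → Prop :=
  fun e q f r => Reach E 0 m (bif e then m else 0) q (bif f then m else 0) r

/-- Walks between cut points depend only on the behaviours of the segments. -/
theorem reach_transfer (hE : Letters E) {c c' : ℕ → ℤ} (hc : Monotone c) (hc' : Monotone c') {N : ℕ}
    (hB : ∀ s < N, Beh E (c (s + 1) - c s) = Beh E (c' (s + 1) - c' s))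
    {k k' : ℕ} (hk : k ≤ N) (hk' : k' ≤ N) (hN : 0 < N) {q q' : Q}
    (hr : Reach E (c 0) (c N) (c k) q (c k') q') :
    Reach E (c' 0) (c' N) (c' k) q (c' k') q' := by
  refine glue hE (Good := fun m q1 => Reach E (c' 0) (c' N) (c' k) q (c' m) q1) hc ?_ hk hk' hN
    (.refl q (hc' (Nat.zero_le _)) (hc' hk)) hr
  intro s hs e e' q1 q2 he he' hg hr
  refine hg.trans (Reach.mono (lo := c' s) (hi := c' (s + 1)) ?_ (hc' (Nat.zero_le _)) (hc' hs))
  have conv : ∀ (d : ℕ → ℤ) (e : ℕ), (e = s ∨ e = s + 1) →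
      d e - d s = bif decide (e = s + 1) then d (s + 1) - d s else 0 := by
    rintro d e (rfl | rfl) <;> simp
  have h1 := hr.shift (-c s)
  simp only [← sub_eq_add_neg, conv c e he, conv c e' he', sub_self] at h1
  have h2 : Beh E (c (s + 1) - c s) (decide (e = s + 1)) q1 (decide (e' = s + 1)) q2 := h1
  rw [hB s hs] at h2
  have h3 := Reach.shift h2 (c' s)
  rw [← conv c' e he, ← conv c' e' he'] at h3
  simpa using h3

/-! ### Periodicity of behaviours -/

theorem beh_succ (hE : Letters E) {m m' : ℕ} (h : Beh E m = Beh E m') :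
    Beh E ((m + 1 : ℕ) : ℤ) = Beh E ((m' + 1 : ℕ) : ℤ) := by
  -- Cut `[0, m + 1]` at `m`.
  let c : ℕ → ℕ → ℤ := fun m i => if i = 0 then 0 else if i = 1 then m else m + 1
  have hc : ∀ m, Monotone (c m) := by
    intro m i j hij
    simp only [c]
    split_ifs <;> omega
  have key : ∀ m m' : ℕ, Beh E m = Beh E m' → ∀ e q e' q', Beh E ((m + 1 : ℕ) : ℤ) e q e' q' →
      Beh E ((m' + 1 : ℕ) : ℤ) e q e' q' := by
    intro m m' h e q e' q' hr
    have conv : ∀ (m : ℕ) (e : Bool), (bif e then ((m + 1 : ℕ) : ℤ) else 0) =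
        c m (bif e then 2 else 0) := by
      rintro m (_ | _) <;> simp [c]
    have hle : ∀ e : Bool, (bif e then 2 else 0) ≤ 2 := by decide
    unfold Beh at hr ⊢
    rw [conv, conv] at hr ⊢
    have hr : Reach E (c m 0) (c m 2) (c m (bif e then 2 else 0)) q
      (c m (bif e' then 2 else 0)) q' := by simpa [c] using hr
    have := reach_transfer hE (hc m) (hc m') (N := 2) ?_ (hle e) (hle e') two_pos hr
    · simpa [c] using this
    · intro s hs
      interval_cases s
      · simpa [c] using h
      · simp [c]
  funext e q e' q'
  exact propext ⟨key m m' h e q e' q', key m' m h.symm e q e' q'⟩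

theorem exists_period [Finite Q] (hE : Letters E) :
    ∃ t n : ℕ, 1 ≤ n ∧ ∀ m m' : ℤ, (t : ℤ) ≤ m → (t : ℤ) ≤ m' → m ≡ m' [ZMOD n] →
      Beh E m = Beh E m' := by
  obtain ⟨i, j, hij, h⟩ := Finite.exists_ne_map_eq_of_infinite (fun m : ℕ => Beh E (m : ℤ))
  wlog hlt : i < j generalizing i j
  · exact this j i hij.symm h.symm (by omega)
  obtain ⟨n, rfl⟩ := Nat.exists_eq_add_of_lt hlt
  have h1 : ∀ d : ℕ, Beh E ((i + d : ℕ) : ℤ) = Beh E ((i + d + (n + 1) : ℕ) : ℤ) := by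
    intro d
    induction d with
    | zero => simpa [add_assoc] using h
    | succ d ih =>
      have := beh_succ hE ih
      rwa [show i + d + 1 = i + (d + 1) by omega,
        show i + d + (n + 1) + 1 = i + (d + 1) + (n + 1) by omega] at this
  have h2 : ∀ k d : ℕ, Beh E ((i + d : ℕ) : ℤ) = Beh E ((i + d + (n + 1) * k : ℕ) : ℤ) := by
    intro k
    induction k with
    | zero => simp
    | succ k ih =>
      intro d
      rw [ih d, add_assoc i, h1,
        show i + (d + (n + 1) * k) + (n + 1) = i + d + (n + 1) * (k + 1) by ring]
  have h3 : ∀ m m' : ℤ, (i : ℤ) ≤ m → m ≤ m' → m ≡ m' [ZMOD ((n + 1 : ℕ) : ℤ)] →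
      Beh E m = Beh E m' := by
    intro m m' hm hmm' hmod
    obtain ⟨k, hk⟩ := hmod.dvd
    have hk0 : 0 ≤ k := by
      by_contra hneg
      have : ((n + 1 : ℕ) : ℤ) * k < 0 := mul_neg_of_pos_of_neg (by positivity) (by omega)
      omega
    obtain ⟨d, rfl⟩ := Int.le.dest hm
    lift k to ℕ using hk0
    have := h2 k d
    rw [show m' = ((i + d + (n + 1) * k : ℕ) : ℤ) by push_cast at hk ⊢; linarith]
    simpa using this
  refine ⟨i, n + 1, by omega, fun m m' hm hm' hmod => ?_⟩
  rcases le_total m m' with hle | hle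
  · exact h3 m m' hm hle hmod
  · exact (h3 m' m hm' hle hmod.symm).symm

/-- Membership depends only on the behaviours of the three segments cut out of `[u.l, u.r]` by two
points, of which the one numbered `k` is the origin and the one numbered `k'` is `u.p`. -/
theorem path_transfer (hE : Letters E) {c c' : ℕ → ℤ} (hc : Monotone c) (hc' : Monotone c')
    (hB : ∀ s < 3, Beh E (c (s + 1) - c s) = Beh E (c' (s + 1) - c' s))
    {k k' : ℕ} (hk : k ≤ 3) (hkp : k' ≤ 3) {u u' : F} {q q' : Q}
    (hl : c 0 = u.l) (hr : c 3 = u.r) (h0 : c k = 0) (hp : c k' = u.p)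
    (hl' : c' 0 = u'.l) (hr' : c' 3 = u'.r) (h0' : c' k = 0) (hp' : c' k' = u'.p)
    (h : Path E q u q') : Path E q u' q' := by
  have T : ∀ {i j : ℕ} {q q' : Q}, i ≤ 3 → j ≤ 3 →
      Reach E (c 0) (c 3) (c i) q (c j) q' → Reach E (c' 0) (c' 3) (c' i) q (c' j) q' :=
    fun hi hj => reach_transfer hE hc hc' hB hi hj (by norm_num)
  apply path_of_touch
  have ht := touch hE h
  rw [← hl, ← hr, ← hp, ← h0] at ht
  rw [← hl', ← hr', ← hp', ← h0']
  rcases ht with ⟨q1, q2, i1, i2, i3⟩ | ⟨q1, q2, i1, i2, i3⟩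
  · exact .inl ⟨q1, q2, T hk (by omega) i1, T (by omega) le_rfl i2, T le_rfl hkp i3⟩
  · exact .inr ⟨q1, q2, T hk le_rfl i1, T le_rfl (by omega) i2, T (by omega) hkp i3⟩

/-- Cut points of an interval with left end `l` into segments of lengths `x`, `y`, `z`. -/
def cuts (l x y z : ℤ) : ℕ → ℤ :=
  fun i => if i = 0 then l else if i = 1 then l + x else if i = 2 then l + x + y else l + x + y + z

theorem cuts_mono {l x y z : ℤ} (hx : 0 ≤ x) (hy : 0 ≤ y) (hz : 0 ≤ z) :
    Monotone (cuts l x y z) := by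
  intro i j hij
  simp only [cuts]
  split_ifs <;> omega

theorem cuts_beh {l x y z l' x' y' z' : ℤ} (hx : Beh E x = Beh E x') (hy : Beh E y = Beh E y')
    (hz : Beh E z = Beh E z') : ∀ s < 3, Beh E (cuts l x y z (s + 1) - cuts l x y z s) =
      Beh E (cuts l' x' y' z' (s + 1) - cuts l' x' y' z' s) := by
  intro s hs
  interval_cases s
  · simpa [cuts] using hx
  · simpa [cuts] using hy
  · simpa [cuts] using hz

theorem path_transfer_pos (hE : Letters E) {u v : F} {q q' : Q} (hu : 0 ≤ u.p) (hv : 0 ≤ v.p)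
    (hx : Beh E (-u.l) = Beh E (-v.l)) (hy : Beh E u.p = Beh E v.p)
    (hz : Beh E (u.r - u.p) = Beh E (v.r - v.p)) (h : Path E q u q') : Path E q v q' := by
  have h1 := u.hl
  have h2 := v.hl
  have h3 := u.hpr
  have h4 := v.hpr
  exact path_transfer (k := 1) (k' := 2) hE
    (cuts_mono (l := u.l) (x := -u.l) (y := u.p) (z := u.r - u.p) (by omega) hu (by omega))
    (cuts_mono (l := v.l) (x := -v.l) (y := v.p) (z := v.r - v.p) (by omega) hv (by omega))
    (cuts_beh hx hy hz) (by norm_num) (by norm_num) (by simp [cuts]) (by simp [cuts])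
    (by simp [cuts]) (by simp [cuts]) (by simp [cuts]) (by simp [cuts]) (by simp [cuts])
    (by simp [cuts]) h

/-- For `u.p ≤ 0` the cut points are met in the order `u.l ≤ u.p ≤ 0 ≤ u.r`. -/
theorem path_transfer_neg (hE : Letters E) {u v : F} {q q' : Q} (hu : u.p ≤ 0) (hv : v.p ≤ 0)
    (hx : Beh E (u.p - u.l) = Beh E (v.p - v.l)) (hy : Beh E (-u.p) = Beh E (-v.p))
    (hz : Beh E u.r = Beh E v.r) (h : Path E q u q') : Path E q v q' := by
  have h1 := u.hlp
  have h2 := v.hlp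
  have h3 := u.hr
  have h4 := v.hr
  exact path_transfer (k := 2) (k' := 1) hE
    (cuts_mono (l := u.l) (x := u.p - u.l) (y := -u.p) (z := u.r) (by omega) (by omega) (by omega))
    (cuts_mono (l := v.l) (x := v.p - v.l) (y := -v.p) (z := v.r) (by omega) (by omega) (by omega))
    (cuts_beh hx hy hz) (by norm_num) (by norm_num) (by simp [cuts]) (by simp [cuts])
    (by simp [cuts]) (by simp [cuts]) (by simp [cuts]) (by simp [cuts]) (by simp [cuts])
    (by simp [cuts]) h

end Reach

theorem inv_inv' (u : F) : inv (inv u) = u := by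
  ext <;> simp [inv]

end F

/-! ### The normal form -/

/-- `η_{n,t+n}`: for `m ≥ t + n` the largest `i < t + n` congruent to `m` is the representative of
`m` modulo `n` in `[t, t + n)`. -/
def etaFun (t n : ℤ) (m : ℤ) : ℤ :=
  if t + n ≤ m then t + (m - t) % n else if t + n ≤ -m then -(t + (-m - t) % n) else m

theorem etaFun_spec {t n : ℤ} (ht : 0 ≤ t) (hn : 1 ≤ n) : EtaSpec n (t + n) (etaFun t n) := by
  refine ⟨fun m h0 h1 => ?_, fun m hm => ?_, fun m hm => ?_⟩
  · simp only [etaFun]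
    split_ifs <;> omega
  · have h1 := Int.emod_nonneg (m - t) (show n ≠ 0 by omega)
    have h2 := Int.emod_lt_of_pos (m - t) (show 0 < n by omega)
    have h3 : t + (m - t) % n ≡ m [ZMOD n] := by
      simpa using (Int.ModEq.refl t).add (Int.mod_modEq (m - t) n)
    rw [etaFun, if_pos hm]
    refine ⟨⟨by omega, by omega, h3⟩, ?_⟩
    rintro i ⟨-, hi2, hi3⟩
    by_contra hlt
    obtain ⟨k, hk⟩ := (h3.trans hi3.symm).dvd
    have hk1 : 1 ≤ k := by
      by_contra hk0
      have : n * k ≤ 0 := mul_nonpos_of_nonneg_of_nonpos (by omega) (by omega)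
      omega
    have := mul_le_mul_of_nonneg_left hk1 (show 0 ≤ n by omega)
    omega
  · simp only [etaFun, neg_neg]
    split_ifs <;> omega

/-- Let `L` be a rational subset of `F`.  Then there are integers
`n' ≥ n ≥ 1` such that, writing `ζ = ζ_{n,n'}`:
(i) `ζ(L⁺) = L ∩ W_{n'}` and `L⁺ = {u ∈ F⁺ : ζ(u) ∈ L ∩ W_{n'}}`;
(ii) `ζ((L⁻)⁻¹) = L⁻¹ ∩ W_{n'}` and `L⁻ = {u ∈ F⁻ : ζ(u⁻¹) ∈ L⁻¹ ∩ W_{n'}}`.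
Here `F⁺ = {uπ ≥ 0}`, `F⁻ = {uπ ≤ 0}`, `L⁺ = L ∩ F⁺`, `L⁻ = L ∩ F⁻`, and `ζ` is expressed
through the relation `ZetaRel η u v` (meaning `v = ζ(u)`). -/
theorem zeta_normal_form (L : Set F) (hL : F.IsRat L) :
    ∃ (n n' : ℤ) (η : ℤ → ℤ), 1 ≤ n ∧ n ≤ n' ∧ EtaSpec n n' η ∧
      (∀ v : F, (∃ u, u ∈ L ∧ 0 ≤ u.p ∧ ZetaRel η u v) ↔ (v ∈ L ∧ InW n' v)) ∧
      (∀ u : F, 0 ≤ u.p → ∀ v : F, ZetaRel η u v → (u ∈ L ↔ (v ∈ L ∧ InW n' v))) ∧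
      (∀ v : F, (∃ u, u ∈ L ∧ u.p ≤ 0 ∧ ZetaRel η (F.inv u) v) ↔
        ((∃ w ∈ L, F.inv w = v) ∧ InW n' v)) ∧
      (∀ u : F, u.p ≤ 0 → ∀ v : F, ZetaRel η (F.inv u) v →
        (u ∈ L ↔ ((∃ w ∈ L, F.inv w = v) ∧ InW n' v))) := by
  obtain ⟨Q, E, I, A, hQ, hE, hacc⟩ := hL.accepted
  obtain ⟨t, n, hn, hper⟩ := F.exists_period hE
  have spec := etaFun_spec (t := t) (n := n) (by omega) (by omega)
  obtain ⟨s1, s2, s3⟩ := id spec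
  have eta_beh : ∀ m : ℤ, 0 ≤ m → 0 ≤ etaFun t n m ∧ etaFun t n m < t + n ∧
      F.Beh E m = F.Beh E (etaFun t n m) := by
    intro m hm
    by_cases hlt : m < t + n
    · rw [s1 m hm hlt]
      exact ⟨hm, hlt, rfl⟩
    · obtain ⟨⟨h1, h2, h3⟩, -⟩ := s2 m (by omega)
      refine ⟨h1, by omega, hper _ _ (by omega) ?_ h3.symm⟩
      rw [etaFun, if_pos (by omega)]
      have := Int.emod_nonneg (m - t) (show (n : ℤ) ≠ 0 by omega)
      omega
  have eta_neg : ∀ m : ℤ, m ≤ 0 → etaFun t n m = -etaFun t n (-m) := by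
    intro m hm
    have := s3 (-m) (by omega)
    rwa [neg_neg] at this
  have fixW : ∀ v : F, InW (t + n) v → ZetaRel (etaFun t n) v v := by
    rintro v ⟨w1, w2, w3, w4⟩
    have h1 := v.hl
    have h2 := v.hpr
    refine ⟨?_, (s1 _ w2 w3).symm, (s1 _ (by omega) w4).symm⟩
    rw [eta_neg _ h1, s1 _ (by omega) (by omega), neg_neg]
  -- The three lengths attached to `u` and to `ζ(u)` have the same behaviours.
  have zeta_beh : ∀ u v : F, 0 ≤ u.p → ZetaRel (etaFun t n) u v → InW (t + n) v ∧
      F.Beh E (-u.l) = F.Beh E (-v.l) ∧ F.Beh E u.p = F.Beh E v.p ∧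
      F.Beh E (u.r - u.p) = F.Beh E (v.r - v.p) := by
    rintro u v hu ⟨z1, z2, z3⟩
    have h1 := u.hl
    have h2 := u.hpr
    obtain ⟨b1, b2, b3⟩ := eta_beh (-u.l) (by omega)
    obtain ⟨b4, b5, b6⟩ := eta_beh u.p hu
    obtain ⟨b7, b8, b9⟩ := eta_beh (u.r - u.p) (by omega)
    have z1' : -v.l = etaFun t n (-u.l) := by rw [z1, eta_neg _ h1, neg_neg]
    rw [← z1'] at b3
    rw [← z2] at b6
    rw [← z3] at b9
    exact ⟨⟨by omega, by omega, by omega, by omega⟩, b3, b6, b9⟩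
  have part2 : ∀ u : F, 0 ≤ u.p → ∀ v : F, ZetaRel (etaFun t n) u v →
      (u ∈ L ↔ (v ∈ L ∧ InW (t + n) v)) := by
    intro u hu v hz
    obtain ⟨hW, b1, b2, b3⟩ := zeta_beh u v hu hz
    rw [hacc, hacc]
    constructor
    · rintro ⟨i, hi, f, hf, hp⟩
      exact ⟨⟨i, hi, f, hf, F.path_transfer_pos hE hu hW.2.1 b1 b2 b3 hp⟩, hW⟩
    · rintro ⟨⟨i, hi, f, hf, hp⟩, -⟩
      exact ⟨i, hi, f, hf, F.path_transfer_pos hE hW.2.1 hu b1.symm b2.symm b3.symm hp⟩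
  have part4 : ∀ u : F, u.p ≤ 0 → ∀ v : F, ZetaRel (etaFun t n) (F.inv u) v →
      (u ∈ L ↔ ((∃ w ∈ L, F.inv w = v) ∧ InW (t + n) v)) := by
    intro u hu v hz
    obtain ⟨hW, b1, b2, b3⟩ := zeta_beh (F.inv u) v (by simp only [F.inv]; omega) hz
    obtain ⟨w, rfl⟩ : ∃ w, v = F.inv w := ⟨F.inv v, (F.inv_inv' v).symm⟩
    have hw : w.p ≤ 0 := by
      have h1 := hW.2.1
      simp only [F.inv] at h1
      omega
    simp only [F.inv, neg_sub, sub_neg_eq_add, sub_add_cancel] at b1 b2 b3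
    have hex : (∃ w' ∈ L, F.inv w' = F.inv w) ↔ w ∈ L := by
      constructor
      · rintro ⟨w', hw', heq⟩
        have := congrArg F.inv heq
        rw [F.inv_inv', F.inv_inv'] at this
        rwa [← this]
      · exact fun h => ⟨w, h, rfl⟩
    rw [hex, hacc, hacc]
    constructor
    · rintro ⟨i, hi, f, hf, hp⟩
      exact ⟨⟨i, hi, f, hf, F.path_transfer_neg hE hu hw b1 b2 b3 hp⟩, hW⟩
    · rintro ⟨⟨i, hi, f, hf, hp⟩, -⟩
      exact ⟨i, hi, f, hf, F.path_transfer_neg hE hw hu b1.symm b2.symm b3.symm hp⟩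
  refine ⟨n, t + n, etaFun t n, by omega, by omega, spec, ?_, part2, ?_, part4⟩
  · intro v
    constructor
    · rintro ⟨u, hu, hp, hz⟩
      exact (part2 u hp v hz).1 hu
    · rintro ⟨hv, hW⟩
      exact ⟨v, hv, hW.2.1, fixW v hW⟩
  · intro v
    constructor
    · rintro ⟨u, hu, hp, hz⟩
      exact (part4 u hp v hz).1 hu
    · rintro ⟨⟨w, hw, rfl⟩, hW⟩
      refine ⟨w, hw, ?_, fixW _ hW⟩
      have h1 := hW.2.1
      simp only [F.inv] at h1
      omega
end

section
/- The set L = {aⁿ : n ∈ ℕ} = {u ∈ F : uλ = 0 and uπ = uρ} is a rational subset of F that is not recognizable; indeed, for all m, n ∈ ℕ, a^m ∼_L a^n implies m = n, so the syntactic congruence ∼_L has infinitely many classes. -/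
/-!
Writing `aⁿ = (0, n, n)`, the two descriptions of `L` agree, and `L = {a}*` is rational.
For the separation of powers, the right context `e_k = a⁻ᵏ aᵏ = (-k, 0, 0)` (an idempotent)
measures the exponent: `aᵐ e_k = (min 0 (m - k), m, m)` lies in `L` exactly when `k ≤ m`.
If `aᵐ ∼_L aⁿ`, the contexts `e_m` and `e_n` give `m ≤ n` and `n ≤ m`. Hence `n ↦ [aⁿ]` is an
injection of `ℕ` into the set of classes.
-/


open Pointwise

/-- The syntactic congruence `∼_L` of a subset `L ⊆ F`:
`u ∼_L v` iff for all `x, y ∈ F`, `xuy ∈ L ⇔ xvy ∈ L`. -/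
def synSetoid (L : Set F) : Setoid F where
  r u v := ∀ x y : F, x * u * y ∈ L ↔ x * v * y ∈ L
  iseqv := ⟨fun _ _ _ => Iff.rfl, fun h x y => (h x y).symm,
    fun h1 h2 x y => (h1 x y).trans (h2 x y)⟩

namespace F

theorem mem_powers_iff (u : F) : (u.l = 0 ∧ u.p = u.r) ↔ ∃ n : ℕ, a ^ n = u := by
  constructor
  · rintro ⟨h1, h2⟩
    have hr := u.hr
    obtain ⟨k1, k2, k3⟩ := a_pow_coords u.r.toNat
    refine ⟨u.r.toNat, F.ext ?_ ?_ ?_⟩ <;> omega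
  · rintro ⟨n, rfl⟩
    obtain ⟨k1, k2, k3⟩ := a_pow_coords n
    omega

/-- The idempotent `e_k = a⁻ᵏ aᵏ = (-k, 0, 0)`. -/
def leftIdem (k : ℕ) : F := ⟨-k, 0, 0, by omega, by omega, by omega, by omega⟩

/-- Right multiplication by `e_k` detects whether the exponent of a power of `a` is at
least `k`. -/
theorem a_pow_mul_leftIdem_mem (m k : ℕ) :
    a ^ m * leftIdem k ∈ {u : F | u.l = 0 ∧ u.p = u.r} ↔ k ≤ m := by
  obtain ⟨k1, k2, k3⟩ := a_pow_coords m
  simp only [Set.mem_ofPred_eq, mul_l, mul_p, mul_r, k1, k2, k3, leftIdem]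
  omega

theorem le_of_syn {m n : ℕ}
    (h : (synSetoid {u : F | u.l = 0 ∧ u.p = u.r}).r (a ^ m) (a ^ n)) : m ≤ n := by
  have h1 := h 1 (leftIdem m)
  rw [one_mul, one_mul, a_pow_mul_leftIdem_mem, a_pow_mul_leftIdem_mem] at h1
  exact h1.1 le_rfl

end F

/-- The set `L = {aⁿ : n ∈ ℕ} = {u ∈ F : uλ = 0 ∧ uπ = uρ}` is a
rational subset of `F` that is not recognizable; indeed `a^m ∼_L a^n` implies `m = n`,
so the syntactic congruence `∼_L` has infinitely many classes. -/
theorem powers_of_a_rational_not_recognizable :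
    ({u : F | u.l = 0 ∧ u.p = u.r} = {u : F | ∃ n : ℕ, F.a ^ n = u}) ∧
    F.IsRat {u : F | u.l = 0 ∧ u.p = u.r} ∧
    (∀ m n : ℕ,
      (synSetoid {u : F | u.l = 0 ∧ u.p = u.r}).r (F.a ^ m) (F.a ^ n) → m = n) ∧
    ¬ Finite (Quotient (synSetoid {u : F | u.l = 0 ∧ u.p = u.r})) := by
  have hL : {u : F | u.l = 0 ∧ u.p = u.r} = {u : F | ∃ n : ℕ, F.a ^ n = u} :=
    Set.ext F.mem_powers_iff
  have hsep : ∀ m n : ℕ,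
      (synSetoid {u : F | u.l = 0 ∧ u.p = u.r}).r (F.a ^ m) (F.a ^ n) → m = n :=
    fun m n h => le_antisymm (F.le_of_syn h) (F.le_of_syn (Setoid.symm' _ h))
  refine ⟨hL, ?_, hsep, fun hfin => ?_⟩
  · have hstar : {u : F | u.l = 0 ∧ u.p = u.r} = ⋃ k : ℕ, ({F.a} : Set F) ^ k := by
      rw [hL]
      ext u
      simp [eq_comm]
    rw [hstar]
    exact F.IsRat.star _ (F.IsRat.finite _ (Set.finite_singleton _))
  · exact not_injective_infinite_finite
      (fun n : ℕ => Quotient.mk (synSetoid {u : F | u.l = 0 ∧ u.p = u.r}) (F.a ^ n))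
      (fun m n h => hsep m n (Quotient.exact h))
end

section
/- Let L be a rational subset of F, and suppose n, n' ≥ 1 and W, W' ⊆ W_{n'} are such that L⁺ = {u ∈ F⁺ : ζ_{n,n'}(u) ∈ W} and L⁻ = {u ∈ F⁻ : ζ_{n,n'}(u⁻¹) ∈ W'}. Then L is recognizable if and only if a^{3n'+n} ∼_L a^{3n'}. -/
/-!
Write `A = a ^ m`, so that `x * A * y` has coordinates
`l = min xλ (xπ + m + yλ)`, `p = xπ + m + yπ`, `r = max xρ (xπ + m + yρ)`.
The hypotheses say that membership of `u` in `L` depends only on the `η`-values of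
`(l, p, r - p)` when `p ≥ 0` and of `(l - p, p, r)` when `p ≤ 0`, and `η` does not change when an
argument of absolute value at least `n' - n` is moved away from `0` by a multiple of `n`
(`EtaSpec.eta_eq`, `mem_iff_of_shift`).

*Finite quotient implies the relation.*  The pigeonhole principle gives `a ^ i ∼ a ^ j` with
`i < j`, hence `a ^ k ∼ a ^ (k + t (j - i))` for all `k ≥ i` and all `t`.  For fixed `x, y` and large
exponents, membership of `x * a ^ k * y` is insensitive to `k ↦ k + n`; therefore
`a ^ k ∼ a ^ (k + n)` for all `k ≥ i` (`pow_rel_of_rel`).  The threshold is brought down to `3n'` by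
`exists_inflate`: for all `x, y` and every multiple `K` of `n` there are `x', y'` such that
`x * a ^ m * y ∈ L ↔ x' * a ^ (m + K) * y' ∈ L` whenever `3n' ≤ m ≤ 3n' + n`.  Which coordinates
absorb the extra `K` depends on `xπ` and `yπ`.

*The relation implies a finite quotient.*  Every `u` factors as `a⁻ⁱ aʲ a⁻ᵏ`, and a congruence on an
inverse monoid respects inversion, so the powers of `a⁻¹` satisfy the same relation as those of `a`.
All three exponents can thus be reduced below `3n' + n`.
-/

open Pointwise

/-! ### Periodicity of `η` and membership in `L` -/

/-- For `m ≥ n' - n` (not only `m ≥ n'`), the value `η m` is the greatest residue of `m` below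
`n'`. -/
theorem EtaSpec.isGreatest {n n' : ℤ} {η : ℤ → ℤ} (hη : EtaSpec n n' η) (hn : 1 ≤ n)
    (hn' : n ≤ n') {m : ℤ} (hm : n' - n ≤ m) :
    IsGreatest {i : ℤ | 0 ≤ i ∧ i ≤ n' - 1 ∧ i ≡ m [ZMOD n]} (η m) := by
  by_cases h : n' ≤ m
  · exact hη.2.1 m h
  · rw [hη.1 m (by omega) (by omega)]
    refine ⟨⟨by omega, by omega, Int.ModEq.refl _⟩, ?_⟩
    rintro i ⟨-, hi, hmod⟩
    obtain ⟨c, hc⟩ := hmod.symm.dvd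
    -- `i - m` is a multiple of `n` smaller than `n`
    have : c < 1 := by
      by_contra hc1
      have : n * 1 ≤ n * c := mul_le_mul_of_nonneg_left (by omega) (by omega)
      omega
    have : n * c ≤ n * 0 := mul_le_mul_of_nonneg_left (by omega) (by omega)
    omega

theorem EtaSpec.nonneg {n n' : ℤ} {η : ℤ → ℤ} (hη : EtaSpec n n' η) {m : ℤ} (hm : 0 ≤ m) :
    0 ≤ η m := by
  by_cases h : n' ≤ m
  · exact (hη.2.1 m h).1.1
  · rw [hη.1 m hm (by omega)]
    exact hm

theorem EtaSpec.nonpos {n n' : ℤ} {η : ℤ → ℤ} (hη : EtaSpec n n' η) {m : ℤ} (hm : m ≤ 0) :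
    η m ≤ 0 := by
  have h := hη.2.2 (-m) (by omega)
  have h' := hη.nonneg (m := -m) (by omega)
  rw [neg_neg] at h
  omega

/-- `j` is either `i` itself, or `i` moved away from `0` by `K`, in the range `|i| ≥ b`. -/
def Shift (b K i j : ℤ) : Prop :=
  j = i ∨ (b ≤ i ∧ j = i + K) ∨ (i ≤ -b ∧ j = i - K)

theorem EtaSpec.eta_eq {n n' : ℤ} {η : ℤ → ℤ} (hη : EtaSpec n n' η) (hn : 1 ≤ n)
    (hn' : n ≤ n') {K : ℤ} (hK : 0 ≤ K) (hd : n ∣ K) {i j : ℤ} (h : Shift (n' - n) K i j) :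
    η i = η j := by
  have key : ∀ m : ℤ, n' - n ≤ m → η m = η (m + K) := by
    intro m hm
    refine (hη.isGreatest hn hn' hm).unique ?_
    have h2 := hη.isGreatest hn hn' (m := m + K) (by omega)
    have hmod : m + K ≡ m [ZMOD n] := by
      have : m - (m + K) = -K := by ring
      rw [Int.modEq_iff_dvd, this]
      exact hd.neg_right
    have hset : {i : ℤ | 0 ≤ i ∧ i ≤ n' - 1 ∧ i ≡ m + K [ZMOD n]}
        = {i : ℤ | 0 ≤ i ∧ i ≤ n' - 1 ∧ i ≡ m [ZMOD n]} := by
      ext i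
      exact ⟨fun h => ⟨h.1, h.2.1, h.2.2.trans hmod⟩,
        fun h => ⟨h.1, h.2.1, h.2.2.trans hmod.symm⟩⟩
    rwa [hset] at h2
  rcases h with rfl | ⟨hi, rfl⟩ | ⟨hi, rfl⟩
  · rfl
  · exact key i hi
  · have h1 := hη.2.2 (-i) (by omega)
    have h2 := hη.2.2 (-i + K) (by omega)
    have h3 := key (-i) (by omega)
    have h4 : -(-i + K) = i - K := by ring
    rw [neg_neg] at h1
    rw [h4] at h2
    omega

theorem EtaSpec.exists_zetaRel {n n' : ℤ} {η : ℤ → ℤ} (hη : EtaSpec n n' η) (u : F)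
    (hu : 0 ≤ u.p) : ∃ v : F, ZetaRel η u v := by
  have h1 := hη.nonpos u.hl
  have h2 := hη.nonneg hu
  have h3 := hη.nonneg (m := u.r - u.p) (by have := u.hpr; omega)
  exact ⟨⟨η u.l, η u.p, η u.p + η (u.r - u.p), h1, by omega, by omega, by omega⟩,
    rfl, rfl, by simp⟩

/-- The description of `L⁺` and `L⁻` through `ζ_{n,n'}`. -/
structure Described (L : Set F) (n n' : ℤ) (η : ℤ → ℤ) (W W' : Set F) : Prop where
  hn : 1 ≤ n
  hn' : n ≤ n'
  hη : EtaSpec n n' η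
  plus : ∀ u : F, 0 ≤ u.p → ∀ v : F, ZetaRel η u v → (u ∈ L ↔ v ∈ W)
  minus : ∀ u : F, u.p ≤ 0 → ∀ v : F, ZetaRel η (F.inv u) v → (u ∈ L ↔ v ∈ W')

/-- Membership in `L` is unchanged by moving large coordinates away from `0` by a multiple of `n`.
The relevant coordinates depend on the sign of `p`. -/
theorem mem_iff_of_shift {L : Set F} {n n' : ℤ} {η : ℤ → ℤ} {W W' : Set F}
    (D : Described L n n' η W W') {K : ℤ} (hK : 0 ≤ K) (hd : n ∣ K) {u v : F}
    (h : (0 ≤ u.p ∧ 0 ≤ v.p ∧ Shift (n' - n) K u.p v.p ∧ Shift (n' - n) K u.l v.l ∧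
        Shift (n' - n) K (u.r - u.p) (v.r - v.p)) ∨
      (u.p ≤ 0 ∧ v.p ≤ 0 ∧ Shift (n' - n) K u.p v.p ∧
        Shift (n' - n) K (u.l - u.p) (v.l - v.p) ∧ Shift (n' - n) K u.r v.r)) :
    u ∈ L ↔ v ∈ L := by
  have E : ∀ {i j : ℤ}, Shift (n' - n) K i j → η i = η j := D.hη.eta_eq D.hn D.hn' hK hd
  rcases h with ⟨h1, h2, hp, hl, hr⟩ | ⟨h1, h2, hp, hl, hr⟩
  · obtain ⟨w, hw⟩ := D.hη.exists_zetaRel u h1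
    rw [D.plus u h1 w hw, D.plus v h2 w ⟨hw.1.trans (E hl), hw.2.1.trans (E hp),
      hw.2.2.trans (E hr)⟩]
  · have h1' : 0 ≤ (F.inv u).p := by simpa [F.inv] using h1
    obtain ⟨w, hw⟩ := D.hη.exists_zetaRel (F.inv u) h1'
    rw [D.minus u h1 w hw, D.minus v h2 w]
    refine ⟨hw.1.trans (E hl), hw.2.1.trans (E ?_), hw.2.2.trans (E ?_)⟩
    · simp only [F.inv, Shift] at hp ⊢
      omega
    · simp only [F.inv, Shift] at hr ⊢
      omega

/-! ### Powers of the generator -/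

theorem F.a_pow_s14 (m : ℕ) : (F.a ^ m).l = 0 ∧ (F.a ^ m).p = m ∧ (F.a ^ m).r = m := by
  induction m with
  | zero => simp
  | succ m ih =>
    obtain ⟨h1, h2, h3⟩ := ih
    have e : F.a.l = 0 ∧ F.a.p = 1 ∧ F.a.r = 1 := ⟨rfl, rfl, rfl⟩
    simp only [pow_succ, F.mul_l, F.mul_p, F.mul_r, h1, h2, h3, e]
    push_cast
    omega

theorem F.ainv_pow_s14 (m : ℕ) :
    (F.ainv ^ m).l = -m ∧ (F.ainv ^ m).p = -m ∧ (F.ainv ^ m).r = 0 := by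
  induction m with
  | zero => simp
  | succ m ih =>
    obtain ⟨h1, h2, h3⟩ := ih
    have e : F.ainv.l = -1 ∧ F.ainv.p = -1 ∧ F.ainv.r = 0 := ⟨rfl, rfl, rfl⟩
    simp only [pow_succ, F.mul_l, F.mul_p, F.mul_r, h1, h2, h3, e]
    push_cast
    omega

theorem F.sandwich (x y : F) (m : ℕ) :
    (x * F.a ^ m * y).l = min x.l (x.p + m + y.l) ∧
    (x * F.a ^ m * y).p = x.p + m + y.p ∧
    (x * F.a ^ m * y).r = max x.r (x.p + m + y.r) := by
  obtain ⟨h1, h2, h3⟩ := F.a_pow_s14 m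
  have := x.hlp
  have := y.hr
  simp only [F.mul_l, F.mul_p, F.mul_r, h1, h2, h3]
  exact ⟨by omega, trivial, by omega⟩

/-- Every element factors as `a⁻ⁱ aʲ a⁻ᵏ`: go down to the minimum, up to the maximum, and back
down to the endpoint. -/
theorem F.exists_factor (u : F) : ∃ i j k : ℕ, u = F.ainv ^ i * F.a ^ j * F.ainv ^ k := by
  have := u.hl
  have := u.hr
  have := u.hlp
  have := u.hpr
  refine ⟨(-u.l).toNat, (u.r - u.l).toNat, (u.r - u.p).toNat, ?_⟩
  obtain ⟨h1, h2, h3⟩ := F.sandwich (F.ainv ^ (-u.l).toNat) (F.ainv ^ (u.r - u.p).toNat)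
    (u.r - u.l).toNat
  obtain ⟨g1, g2, g3⟩ := F.ainv_pow_s14 (-u.l).toNat
  obtain ⟨k1, k2, k3⟩ := F.ainv_pow_s14 (u.r - u.p).toNat
  ext
  · rw [h1, g1, g2, k1]; omega
  · rw [h2, g2, k2]; omega
  · rw [h3, g3, g2, k3]; omega

/-- The syntactic congruence as a `Con`. -/
def synCon (L : Set F) : Con F where
  toSetoid := synSetoid L
  mul' := by
    intro u v u' v' h h' x y
    have h1 := h x (u' * y)
    have h2 := h' (x * v) y
    simp only [mul_assoc] at h1 h2 ⊢
    exact h1.trans h2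

/-! ### A finite quotient forces the relation -/

/-- A middle factor `a ^ m` with `3n' ≤ m ≤ 3n' + n` can be enlarged by a multiple `K` of `n` without
changing membership in `L`, provided the outer factors are adjusted, uniformly in `m`. -/
theorem exists_inflate {L : Set F} {n n' : ℤ} {η : ℤ → ℤ} {W W' : Set F}
    (D : Described L n n' η W W') (K : ℕ) (hd : n ∣ (K : ℤ)) (x y : F) :
    ∃ x' y' : F, ∀ m : ℕ, 3 * n' ≤ m → m ≤ 3 * n' + n →
      (x * F.a ^ m * y ∈ L ↔ x' * F.a ^ (m + K) * y' ∈ L) := by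
  have hn := D.hn
  have hn' := D.hn'
  have a1 := x.hl
  have a2 := x.hr
  have a3 := x.hlp
  have a4 := x.hpr
  have b1 := y.hl
  have b2 := y.hr
  have b3 := y.hlp
  have b4 := y.hpr
  -- it suffices to choose `x', y'` whose products satisfy the shift conditions
  have main : ∀ x' y' : F, (∀ m : ℤ, 3 * n' ≤ m → m ≤ 3 * n' + n →
      ∀ l p r l' p' r' : ℤ, l = min x.l (x.p + m + y.l) → p = x.p + m + y.p →
      r = max x.r (x.p + m + y.r) → l' = min x'.l (x'.p + (m + K) + y'.l) →
      p' = x'.p + (m + K) + y'.p → r' = max x'.r (x'.p + (m + K) + y'.r) →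
      (0 ≤ p ∧ 0 ≤ p' ∧ Shift (n' - n) K p p' ∧ Shift (n' - n) K l l' ∧
        Shift (n' - n) K (r - p) (r' - p')) ∨
      (p ≤ 0 ∧ p' ≤ 0 ∧ Shift (n' - n) K p p' ∧
        Shift (n' - n) K (l - p) (l' - p') ∧ Shift (n' - n) K r r')) →
      ∃ x' y' : F, ∀ m : ℕ, 3 * n' ≤ m → m ≤ 3 * n' + n →
        (x * F.a ^ m * y ∈ L ↔ x' * F.a ^ (m + K) * y' ∈ L) := by
    intro x' y' h
    refine ⟨x', y', fun m hm hm' => mem_iff_of_shift D (Int.natCast_nonneg K) hd ?_⟩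
    obtain ⟨h1, h2, h3⟩ := F.sandwich x y m
    obtain ⟨g1, g2, g3⟩ := F.sandwich x' y' (m + K)
    push_cast at g1 g2 g3
    exact h m hm hm' _ _ _ _ _ _ h1 h2 h3 g1 g2 g3
  by_cases c1 : x.p ≤ -n' ∧ -2 * n' ≤ y.p
  -- the minimum of the product drops by `K`
  · refine main ⟨x.l - K, x.p - K, x.r, by omega, by omega, by omega, by omega⟩
      ⟨y.l - K, y.p, y.r, by omega, by omega, by omega, by omega⟩ ?_
    intro m hm hm' l p r l' p' r' h1 h2 h3 h4 h5 h6
    dsimp only at h4 h5 h6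
    have hp : p' = p := by omega
    have hl : l' = l - K := by omega
    have hr : r' = r := by omega
    rcases le_total 0 p with h | h
    · exact Or.inl ⟨h, by omega, Or.inl hp, Or.inr (Or.inr ⟨by omega, hl⟩), Or.inl (by omega)⟩
    · exact Or.inr ⟨h, by omega, Or.inl hp, Or.inr (Or.inr ⟨by omega, by omega⟩), Or.inl hr⟩
  by_cases c2 : y.p ≤ -n' ∧ -2 * n' ≤ x.p
  -- the maximum of the product rises by `K`
  · refine main ⟨x.l, x.p, x.r + K, by omega, by omega, by omega, by omega⟩
      ⟨y.l - K, y.p - K, y.r, by omega, by omega, by omega, by omega⟩ ?_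
    intro m hm hm' l p r l' p' r' h1 h2 h3 h4 h5 h6
    dsimp only at h4 h5 h6
    have hp : p' = p := by omega
    have hl : l' = l := by omega
    have hr : r' = r + K := by omega
    rcases le_total 0 p with h | h
    · exact Or.inl ⟨h, by omega, Or.inl hp, Or.inl hl, Or.inr (Or.inl ⟨by omega, by omega⟩)⟩
    · exact Or.inr ⟨h, by omega, Or.inl hp, Or.inl (by omega), Or.inr (Or.inl ⟨by omega, hr⟩)⟩
  by_cases c3 : x.p < -2 * n' ∧ y.p < -2 * n'
  -- here `p` is so negative that it can drop by `K`, while `l - p` and `r` stay the same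
  · refine main ⟨x.l - K, x.p - K, x.r, by omega, by omega, by omega, by omega⟩
      ⟨y.l - K, y.p - K, y.r, by omega, by omega, by omega, by omega⟩ ?_
    intro m hm hm' l p r l' p' r' h1 h2 h3 h4 h5 h6
    dsimp only at h4 h5 h6
    exact Or.inr ⟨by omega, by omega, Or.inr (Or.inr ⟨by omega, by omega⟩), Or.inl (by omega),
      Or.inl (by omega)⟩
  -- here both `x.p` and `y.p` exceed `-n'`, so `p ≥ n'`; the whole middle segment is stretched
  · refine main ⟨x.l, x.p, x.r + K, by omega, by omega, by omega, by omega⟩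
      ⟨y.l - K, y.p, y.r, by omega, by omega, by omega, by omega⟩ ?_
    intro m hm hm' l p r l' p' r' h1 h2 h3 h4 h5 h6
    dsimp only at h4 h5 h6
    exact Or.inl ⟨by omega, by omega, Or.inr (Or.inl ⟨by omega, by omega⟩), Or.inl (by omega),
      Or.inl (by omega)⟩

/-- Any period `q` of the powers of `a` from `i` on can be replaced by `n`: jumping by a large
multiple of `q` leads to exponents for which `η` absorbs a further `n`. -/
theorem pow_rel_of_rel {L : Set F} {n n' : ℕ} {η : ℤ → ℤ} {W W' : Set F}
    (D : Described L n n' η W W') {i q : ℕ} (hq : 1 ≤ q)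
    (h : synCon L (F.a ^ i) (F.a ^ (i + q))) (k : ℕ) (hk : i ≤ k) :
    synCon L (F.a ^ k) (F.a ^ (k + n)) := by
  have hstep : ∀ k, i ≤ k → synCon L (F.a ^ k) (F.a ^ (k + q)) := by
    intro k hk
    obtain ⟨c, rfl⟩ := Nat.exists_eq_add_of_le hk
    have := (synCon L).mul h ((synCon L).refl (F.a ^ c))
    rwa [← pow_add, ← pow_add, add_right_comm] at this
  have hiter : ∀ t k, i ≤ k → synCon L (F.a ^ k) (F.a ^ (k + t * q)) := by
    intro t
    induction t with
    | zero => intro k _; simpa using (synCon L).refl _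
    | succ t ih =>
      intro k hk
      have := (synCon L).trans (ih k hk) (hstep (k + t * q) (by omega))
      rwa [add_assoc, ← Nat.succ_mul] at this
  intro x y
  have hn := D.hn
  have hn' := D.hn'
  -- `t` is large enough that all corrections by `x` and `y` are dominated by `a ^ (k + t * q)`
  obtain ⟨t, ht⟩ : ∃ t : ℕ, (n' : ℤ) + |x.l| + |x.p| + |x.r| + |y.l| + |y.p| + |y.r| ≤ t :=
    ⟨_, Int.self_le_toNat _⟩
  have htq : t ≤ t * q := Nat.le_mul_of_pos_right t hq
  rw [hiter t k hk x y, hiter t (k + n) (by omega) x y]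
  have e : k + n + t * q = (k + t * q) + n := by omega
  rw [e]
  generalize t * q = s at htq
  refine mem_iff_of_shift D (Int.natCast_nonneg n) dvd_rfl (Or.inl ?_)
  obtain ⟨h1, h2, h3⟩ := F.sandwich x y (k + s)
  obtain ⟨g1, g2, g3⟩ := F.sandwich x y (k + s + n)
  rw [h1, h2, h3, g1, g2, g3]
  push_cast
  have := neg_abs_le x.l
  have := neg_abs_le x.p
  have := le_abs_self x.r
  have := neg_abs_le y.l
  have := neg_abs_le y.p
  have := abs_nonneg x.l
  have := abs_nonneg x.p
  have := abs_nonneg x.r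
  have := abs_nonneg y.l
  have := abs_nonneg y.p
  have := abs_nonneg y.r
  have := y.hr
  have := y.hpr
  have := x.hl
  refine ⟨by omega, by omega, Or.inr (Or.inl ⟨by omega, by omega⟩), Or.inl (by omega),
    Or.inl (by omega)⟩

/-! ### The relation forces a finite quotient -/

/-- A congruence on an inverse monoid respects inversion; here for powers of the generator. -/
theorem ainv_pow_rel {L : Set F} {A B : ℕ} (h : synCon L (F.a ^ A) (F.a ^ B)) :
    synCon L (F.ainv ^ A) (F.ainv ^ B) := by
  have inv1 : ∀ m, F.a ^ m * F.ainv ^ m * F.a ^ m = F.a ^ m := by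
    intro m
    obtain ⟨h1, h2, h3⟩ := F.a_pow_s14 m
    obtain ⟨g1, g2, g3⟩ := F.ainv_pow_s14 m
    ext <;> simp only [F.mul_l, F.mul_p, F.mul_r, h1, h2, h3, g1, g2, g3] <;> omega
  have inv2 : ∀ m, F.ainv ^ m * F.a ^ m * F.ainv ^ m = F.ainv ^ m := by
    intro m
    obtain ⟨h1, h2, h3⟩ := F.a_pow_s14 m
    obtain ⟨g1, g2, g3⟩ := F.ainv_pow_s14 m
    ext <;> simp only [F.mul_l, F.mul_p, F.mul_r, h1, h2, h3, g1, g2, g3] <;> omega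
  have comm1 : F.a ^ A * F.ainv ^ A * (F.a ^ B * F.ainv ^ B)
      = F.a ^ B * F.ainv ^ B * (F.a ^ A * F.ainv ^ A) := by
    obtain ⟨h1, h2, h3⟩ := F.a_pow_s14 A
    obtain ⟨g1, g2, g3⟩ := F.ainv_pow_s14 A
    obtain ⟨k1, k2, k3⟩ := F.a_pow_s14 B
    obtain ⟨j1, j2, j3⟩ := F.ainv_pow_s14 B
    ext <;> simp only [F.mul_l, F.mul_p, F.mul_r, h1, h2, h3, g1, g2, g3, k1, k2, k3, j1, j2, j3]
      <;> omega
  have comm2 : F.ainv ^ A * F.a ^ A * (F.ainv ^ B * F.a ^ B)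
      = F.ainv ^ B * F.a ^ B * (F.ainv ^ A * F.a ^ A) := by
    obtain ⟨h1, h2, h3⟩ := F.a_pow_s14 A
    obtain ⟨g1, g2, g3⟩ := F.ainv_pow_s14 A
    obtain ⟨k1, k2, k3⟩ := F.a_pow_s14 B
    obtain ⟨j1, j2, j3⟩ := F.ainv_pow_s14 B
    ext <;> simp only [F.mul_l, F.mul_p, F.mul_r, h1, h2, h3, g1, g2, g3, k1, k2, k3, j1, j2, j3]
      <;> omega
  rw [← Con.eq] at h ⊢
  have I1 := fun m => congrArg (Con.toQuotient (c := synCon L)) (inv1 m)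
  have I2 := fun m => congrArg (Con.toQuotient (c := synCon L)) (inv2 m)
  have C1 := congrArg (Con.toQuotient (c := synCon L)) comm1
  have C2 := congrArg (Con.toQuotient (c := synCon L)) comm2
  simp only [Con.coe_mul, ← h] at I1 I2 C1 C2 ⊢
  have IA := I1 A
  have IB := I1 B
  have JA := I2 A
  have JB := I2 B
  rw [← h] at IB JB
  generalize ((F.a ^ A : F) : (synCon L).Quotient) = s at *
  generalize ((F.ainv ^ A : F) : (synCon L).Quotient) = u at *
  generalize ((F.ainv ^ B : F) : (synCon L).Quotient) = v at *
  -- `u` and `v` are both inverses of `s`, and the idempotents they define commute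
  have e1 : s * u = s * v := by
    calc s * u = s * v * s * u := by rw [IB]
      _ = s * v * (s * u) := by simp only [mul_assoc]
      _ = s * u * (s * v) := C1.symm
      _ = s * u * s * v := by simp only [mul_assoc]
      _ = s * v := by rw [IA]
  have e2 : u * s = v * s := by
    calc u * s = u * (s * v * s) := by rw [IB]
      _ = u * s * (v * s) := by simp only [mul_assoc]
      _ = v * s * (u * s) := C2
      _ = v * (s * u * s) := by simp only [mul_assoc]
      _ = v * s := by rw [IA]
  calc u = u * s * u := JA.symm
    _ = v * s * u := by rw [e2]
    _ = v * (s * u) := mul_assoc _ _ _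
    _ = v * (s * v) := by rw [e1]
    _ = v * s * v := (mul_assoc _ _ _).symm
    _ = v := JB

/-- A relation `g ^ (N + n) ∼ g ^ N` reduces every exponent of `g` below `N + n`. -/
theorem exists_pow_rel_lt {L : Set F} {g : F} {N n : ℕ} (hn : 1 ≤ n)
    (h : synCon L (g ^ (N + n)) (g ^ N)) (j : ℕ) :
    ∃ j' < N + n, synCon L (g ^ j) (g ^ j') := by
  induction j using Nat.strong_induction_on with
  | _ j ih =>
    by_cases hj : j < N + n
    · exact ⟨j, hj, (synCon L).refl _⟩
    · obtain ⟨c, rfl⟩ := Nat.exists_eq_add_of_le (not_lt.1 hj)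
      obtain ⟨j', h1, h2⟩ := ih (N + c) (by omega)
      refine ⟨j', h1, (synCon L).trans ?_ h2⟩
      have := (synCon L).mul h ((synCon L).refl (g ^ c))
      rwa [← pow_add, ← pow_add] at this


/-- Let `L` be a rational subset of `F`, and suppose `n, n' ≥ 1` and
`W, W' ⊆ W_{n'}` are such that `L⁺ = {u ∈ F⁺ : ζ_{n,n'}(u) ∈ W}` and
`L⁻ = {u ∈ F⁻ : ζ_{n,n'}(u⁻¹) ∈ W'}`.  Then `L` is recognizable (i.e. its syntactic
congruence has finitely many classes) if and only if `a^(3n'+n) ∼_L a^(3n')`. -/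
theorem recognizable_iff_syntactic_relation (L : Set F) (hL : F.IsRat L)
    (n n' : ℕ) (hn : 1 ≤ n) (hn' : n ≤ n')
    (η : ℤ → ℤ) (hη : EtaSpec (n : ℤ) (n' : ℤ) η)
    (W W' : Set F) (hW : W ⊆ {u : F | InW (n' : ℤ) u}) (hW' : W' ⊆ {u : F | InW (n' : ℤ) u})
    (hplus : ∀ u : F, 0 ≤ u.p → ∀ v : F, ZetaRel η u v → (u ∈ L ↔ v ∈ W))
    (hminus : ∀ u : F, u.p ≤ 0 → ∀ v : F, ZetaRel η (F.inv u) v → (u ∈ L ↔ v ∈ W')) :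
    Finite (Quotient (synSetoid L)) ↔ (synSetoid L).r (F.a ^ (3 * n' + n)) (F.a ^ (3 * n')) := by
  have D : Described L n n' η W W' :=
    ⟨by exact_mod_cast hn, by exact_mod_cast hn', hη, hplus, hminus⟩
  constructor
  · intro hfin
    obtain ⟨i, q, hq, hrel⟩ : ∃ i q : ℕ, 1 ≤ q ∧ synCon L (F.a ^ i) (F.a ^ (i + q)) := by
      obtain ⟨i, j, hij, h⟩ := Finite.exists_ne_map_eq_of_infinite
        (fun i : ℕ => (Quotient.mk (synSetoid L) (F.a ^ i)))
      have h : synCon L (F.a ^ i) (F.a ^ j) := Quotient.exact h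
      rcases lt_or_gt_of_ne hij with hlt | hlt
      · exact ⟨i, j - i, by omega, by rwa [Nat.add_sub_cancel' hlt.le]⟩
      · exact ⟨j, i - j, by omega, by rw [Nat.add_sub_cancel' hlt.le]; exact (synCon L).symm h⟩
    intro x y
    -- inflate both exponents by `n * i ≥ i`, where the relation already holds
    obtain ⟨x', y', hxy⟩ := exists_inflate D (n * i) (by push_cast; exact dvd_mul_right _ _) x y
    have hni : i ≤ n * i := Nat.le_mul_of_pos_left i hn
    have hlong := pow_rel_of_rel D hq hrel (3 * n' + n * i) (by omega) x' y'
    have e : 3 * n' + n * i + n = 3 * n' + n + n * i := by omega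
    rw [e] at hlong
    rw [hxy (3 * n' + n) (by push_cast; omega) (by push_cast; omega),
      hxy (3 * n') (by push_cast; omega) (by push_cast; omega)]
    exact hlong.symm
  · intro h
    have ha : synCon L (F.a ^ (3 * n' + n)) (F.a ^ (3 * n')) := h
    have hb := ainv_pow_rel ha
    let f : Fin (3 * n' + n) × Fin (3 * n' + n) × Fin (3 * n' + n) → Quotient (synSetoid L) :=
      fun t => Quotient.mk _ (F.ainv ^ (t.1 : ℕ) * F.a ^ (t.2.1 : ℕ) * F.ainv ^ (t.2.2 : ℕ))
    refine Finite.of_surjective f fun c => ?_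
    induction c using Quotient.inductionOn with
    | h u =>
      obtain ⟨i, j, k, rfl⟩ := F.exists_factor u
      obtain ⟨i', hi, ri⟩ := exists_pow_rel_lt hn hb i
      obtain ⟨j', hj, rj⟩ := exists_pow_rel_lt hn ha j
      obtain ⟨k', hk, rk⟩ := exists_pow_rel_lt hn hb k
      exact ⟨(⟨i', hi⟩, ⟨j', hj⟩, ⟨k', hk⟩),
        Quotient.sound ((synCon L).symm ((synCon L).mul ((synCon L).mul ri rj) rk))⟩
end
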